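/- Let V = V^odd be a finite-dimensional graded vector space concentrated in odd degrees ≥ 3 over ℚ, and (ΛV, d) a Sullivan minimal algebra (so ΛV is the exterior algebra on V). Then dim H(ΛV, d) ≥ dim V. -/

import Mathlib

/-- The cohomology of a cochain complex given by a square-zero operator `d`,
as `ker d / (im d ∩ ker d)`. -/
abbrev cohomologyOf {A : Type*} [AddCommGroup A] [Module ℚ A] (d : A →ₗ[ℚ] A) :=
  LinearMap.ker d ⧸ (LinearMap.range d).comap (LinearMap.ker d).subtype

/-!
Choose homogeneous generators `x₁, …, xₙ` of `V` in order of increasing degree, so that `d xᵢ` lies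
in the subalgebra generated by the earlier ones, and work in the power series algebra
`ΛV ⊗ K⟦y₁, …, yₙ⟧`. Starting from `D₀ = d`, perturb the differential one variable at a time: the
subcomplex on the first `q` generators and variables is an acyclic Koszul complex, so `d x_{q+1}`
has an odd `D_q`-primitive there, `x_{q+1}` can be corrected to an odd `D_q`-closed `e_{q+1}`, and
`D_{q+1} = D_q + e_{q+1} ∂/∂y_{q+1}` again makes the next stage acyclic.

Suppose that cohomology lives in degrees belonging to a finite set `T`. A `D_p`-closed series can be
pushed up the degree filtration by coboundaries until its order reaches an element of `T`, and since
`D_{q} (e_{q+1} z) = -e_{q+1} D_{q+1} z`, multiplication by `e_{q+1}` makes it closed for the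
preceding differential while raising its order past that element. If `T` had at most `n` elements,
then, starting from the closed series `1`, all of `T` would be exhausted after `n` multiplications
and `x₁ ⋯ xₙ` would be exact, which it is not. So cohomology lives in more than `n` degrees.
-/

namespace OddSullivan

section OddDerivations

variable {K B : Type*} [CommRing K] [Ring B] [Algebra K B] {σ : B →ₐ[K] B}

/-- An odd derivation of the superalgebra whose grading involution (`1` on even, `-1` on odd
elements) is `σ`; every superalgebra here is encoded by such a `σ`. -/
structure IsOddDerivation (σ : B →ₐ[K] B) (D : B →ₗ[K] B) : Prop where
  leibniz : ∀ s t, D (s * t) = D s * t + σ s * D t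
  map_parity : ∀ s, D (σ s) = -σ (D s)

/-- Supercommutativity of the superalgebra with grading involution `σ`.
Commutativity among even elements is not part of it. -/
structure IsSupercommutative (σ : B →ₐ[K] B) : Prop where
  involutive : Function.Involutive σ
  odd_mul : ∀ e s, σ e = -e → e * s = σ s * e

namespace IsOddDerivation

variable {D : B →ₗ[K] B}

theorem map_one (hD : IsOddDerivation σ D) : D 1 = 0 := by
  simpa using hD.leibniz 1 1

theorem odd_mul (hD : IsOddDerivation σ D) {e : B} (he : σ e = -e) (s : B) :
    D (e * s) = D e * s - e * D s := by
  rw [hD.leibniz, he, neg_mul, sub_eq_add_neg]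

theorem add_odd_mul (hD : IsOddDerivation σ D) (hσ : IsSupercommutative σ) {e : B}
    (he : σ e = -e) {δ : B →ₗ[K] B} (hδ : ∀ s t, δ (s * t) = δ s * t + s * δ t)
    (hδσ : ∀ s, δ (σ s) = σ (δ s)) : IsOddDerivation σ (D + LinearMap.mulLeft K e ∘ₗ δ) where
  leibniz s t := by
    have hes : e * s = σ s * e := hσ.odd_mul e s he
    simp only [LinearMap.add_apply, LinearMap.comp_apply, LinearMap.mulLeft_apply, hD.leibniz, hδ,
      mul_add, add_mul, ← mul_assoc, hes]
    abel
  map_parity s := by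
    simp only [LinearMap.add_apply, LinearMap.comp_apply, LinearMap.mulLeft_apply, hD.map_parity,
      hδσ, map_add, map_mul, he]
    noncomm_ring

end IsOddDerivation

end OddDerivations

namespace IsSupercommutative

variable {K B : Type*} [Field K] [CharZero K] [Ring B] [Algebra K B] {σ : B →ₐ[K] B}

theorem mul_self_of_odd (hσ : IsSupercommutative σ) {e : B} (he : σ e = -e) :
    e * e = 0 := by
  have h := hσ.odd_mul e e he
  rw [he, neg_mul] at h
  have h2 : (2 : K) • (e * e) = 0 := by rw [two_smul, ← sub_neg_eq_add, ← h, sub_self]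
  exact (smul_eq_zero.mp h2).resolve_left two_ne_zero

theorem odd_mul_mul_self (hσ : IsSupercommutative σ) {e : B} (he : σ e = -e) (s : B) :
    e * (e * s) = 0 := by
  rw [← mul_assoc, hσ.mul_self_of_odd he, zero_mul]

end IsSupercommutative

section PowerSeries

open MvPowerSeries Finsupp

variable {ι K A : Type*} [CommRing K] [Ring A] [Algebra K A]

/-- The extension of a linear map to power series with trivial action on the variables. -/
noncomputable def coeffwise (ι : Type*) (f : A →ₗ[K] A) :
    MvPowerSeries ι A →ₗ[K] MvPowerSeries ι A :=
  f.compLeft (ι →₀ ℕ)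

@[simp]
theorem coeff_coeffwise (f : A →ₗ[K] A) (s : MvPowerSeries ι A) (m : ι →₀ ℕ) :
    coeff m (coeffwise ι f s) = f (coeff m s) :=
  rfl

@[simp]
theorem coeff_mapAlgHom (σ : A →ₐ[K] A) (s : MvPowerSeries ι A) (m : ι →₀ ℕ) :
    coeff m (mapAlgHom σ s) = σ (coeff m s) :=
  rfl

theorem coeffwise_C (f : A →ₗ[K] A) (a : A) : coeffwise ι f (C a) = C (f a) := by
  classical
  ext m
  simp only [coeff_coeffwise, coeff_C]
  split_ifs <;> simp

theorem IsOddDerivation.coeffwise {σ : A →ₐ[K] A} {D : A →ₗ[K] A} (hD : IsOddDerivation σ D) :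
    IsOddDerivation (mapAlgHom (σ := ι) σ) (coeffwise ι D) where
  leibniz s t := by
    classical
    ext m
    simp [coeff_mul, hD.leibniz, Finset.sum_add_distrib]
  map_parity s := by
    ext m
    simp [hD.map_parity]

theorem IsSupercommutative.mapAlgHom {σ : A →ₐ[K] A} (hσ : IsSupercommutative σ) :
    IsSupercommutative (mapAlgHom (σ := ι) σ) where
  involutive s := by
    ext m
    simp [hσ.involutive (coeff m s)]
  odd_mul e s he := by
    classical
    ext m
    have hodd (k : ι →₀ ℕ) : σ (coeff k e) = -coeff k e := by
      simpa using congrArg (coeff k) he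
    rw [coeff_mul, coeff_mul, sum_antidiagonal_swap m fun a b ↦ coeff a e * coeff b s]
    exact Finset.sum_congr rfl fun k _ ↦ by simpa using hσ.odd_mul _ (coeff k.1 s) (hodd k.2)

/-- The derivation `∂/∂yᵢ` on power series over a noncommutative ring, as a `K`-linear map; the
coefficient ring `A` is only a `K`-algebra, so `MvPowerSeries.pderiv` does not apply. -/
noncomputable def partialDeriv (K A : Type*) [CommRing K] [Ring A] [Algebra K A] (i : ι) :
    MvPowerSeries ι A →ₗ[K] MvPowerSeries ι A where
  toFun := pderivFun i
  map_add' := pderivFun_add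
  map_smul' k s := by
    ext m
    simp [coeff_pderivFun]

theorem coeff_partialDeriv (i : ι) (s : MvPowerSeries ι A) (m : ι →₀ ℕ) :
    coeff m (partialDeriv K A i s) = ((m i : K) + 1) • coeff (m + single i 1) s := by
  change coeff m (pderivFun i s) = _
  rw [coeff_pderivFun, Algebra.smul_def, map_add, map_natCast, _root_.map_one, ← Nat.cast_succ,
    Nat.cast_comm]

theorem sum_antidiagonal_add_single [DecidableEq ι] {M : Type*} [AddCommMonoid M] (i : ι)
    (m : ι →₀ ℕ) (F : (ι →₀ ℕ) → (ι →₀ ℕ) → M) (hF : ∀ a b, a i = 0 → F a b = 0) :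
    ∑ k ∈ Finset.HasAntidiagonal.antidiagonal (m + single i 1), F k.1 k.2 =
      ∑ k ∈ Finset.HasAntidiagonal.antidiagonal m, F (k.1 + single i 1) k.2 := by
  symm
  refine Finset.sum_of_injOn (fun k ↦ (k.1 + single i 1, k.2)) ?_ ?_ ?_ fun _ _ ↦ rfl
  · rintro ⟨a, b⟩ - ⟨a', b'⟩ - h
    simpa using h
  · rintro ⟨a, b⟩ h
    simp only [Finset.mem_coe, Finset.HasAntidiagonal.mem_antidiagonal] at h ⊢
    rw [← h, add_right_comm]
  · rintro ⟨a, b⟩ hab hnot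
    refine hF _ _ (by_contra fun ha ↦ hnot ⟨(a - single i 1, b), ?_⟩)
    have hle : single i 1 ≤ a := single_le_iff.mpr (Nat.one_le_iff_ne_zero.mpr ha)
    rw [Finset.HasAntidiagonal.mem_antidiagonal] at hab
    simp only [Finset.mem_coe, Finset.HasAntidiagonal.mem_antidiagonal, and_true,
      tsub_add_cancel_of_le hle]
    exact add_right_cancel (b := single i 1) <| by
      rw [add_right_comm, tsub_add_cancel_of_le hle, hab]

theorem partialDeriv_mul (i : ι) (s t : MvPowerSeries ι A) :
    partialDeriv K A i (s * t) = partialDeriv K A i s * t + s * partialDeriv K A i t := by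
  classical
  ext m
  have hsplit : ∀ k ∈ Finset.HasAntidiagonal.antidiagonal (m + single i 1),
      ((m i : K) + 1) • (coeff k.1 s * coeff k.2 t) =
        (k.1 i : K) • (coeff k.1 s * coeff k.2 t) +
          (k.2 i : K) • (coeff k.1 s * coeff k.2 t) := by
    intro k hk
    have hki := DFunLike.congr_fun (Finset.HasAntidiagonal.mem_antidiagonal.mp hk) i
    simp only [Finsupp.add_apply, single_eq_same] at hki
    rw [← add_smul]
    exact_mod_cast congrArg (fun j : ℕ ↦ (j : K) • (coeff k.1 s * coeff k.2 t)) hki.symm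
  rw [coeff_partialDeriv, coeff_mul, Finset.smul_sum, Finset.sum_congr rfl hsplit,
    Finset.sum_add_distrib, map_add, coeff_mul, coeff_mul,
    sum_antidiagonal_add_single i m fun a b ↦ (a i : K) • (coeff a s * coeff b t),
    sum_antidiagonal_swap _ fun a b ↦ (b i : K) • (coeff a s * coeff b t),
    sum_antidiagonal_add_single i m fun a b ↦ (a i : K) • (coeff b s * coeff a t),
    sum_antidiagonal_swap m fun a b ↦ coeff a s * coeff b (partialDeriv K A i t)]
  · simp [coeff_partialDeriv]
  all_goals
    intro a b ha
    simp [ha]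

@[simp]
theorem partialDeriv_C (i : ι) (a : A) : partialDeriv K A i (C a) = 0 :=
  pderivFun_C a

theorem coeffwise_partialDeriv (f : A →ₗ[K] A) (i : ι) (s : MvPowerSeries ι A) :
    coeffwise ι f (partialDeriv K A i s) = partialDeriv K A i (coeffwise ι f s) := by
  ext m
  simp [coeff_partialDeriv]

theorem mapAlgHom_partialDeriv (σ : A →ₐ[K] A) (i : ι) (s : MvPowerSeries ι A) :
    mapAlgHom σ (partialDeriv K A i s) = partialDeriv K A i (mapAlgHom σ s) := by
  ext m
  simp [coeff_partialDeriv]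

theorem partialDeriv_comm (i j : ι) (s : MvPowerSeries ι A) :
    partialDeriv K A i (partialDeriv K A j s) = partialDeriv K A j (partialDeriv K A i s) := by
  ext m
  obtain rfl | hij := eq_or_ne i j
  · rfl
  · simp only [coeff_partialDeriv, Finsupp.add_apply, single_eq_of_ne hij, single_eq_of_ne hij.symm,
      smul_smul, add_right_comm m _ (single i 1), add_zero, mul_comm]

end PowerSeries

section Antiderivatives

open MvPowerSeries Finsupp

variable {ι K A : Type*} [Field K] [Ring A] [Algebra K A]

/-- The antiderivative in `yᵢ` with zero constant of integration. Coefficients at exponents with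
`m i = 0` vanish because `0⁻¹ = 0`. -/
noncomputable def partialAntideriv (K A : Type*) [Field K] [Ring A] [Algebra K A] (i : ι) :
    MvPowerSeries ι A →ₗ[K] MvPowerSeries ι A :=
  LinearMap.pi fun m ↦ (m i : K)⁻¹ • LinearMap.proj (m - single i 1)

theorem coeff_partialAntideriv (i : ι) (s : MvPowerSeries ι A) (m : ι →₀ ℕ) :
    coeff m (partialAntideriv K A i s) = (m i : K)⁻¹ • coeff (m - single i 1) s :=
  rfl

theorem partialDeriv_partialAntideriv [CharZero K] (i : ι) (s : MvPowerSeries ι A) :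
    partialDeriv K A i (partialAntideriv K A i s) = s := by
  ext m
  have hm : (m i : K) + 1 ≠ 0 := Nat.cast_add_one_ne_zero _
  simp [coeff_partialDeriv, coeff_partialAntideriv, smul_smul, hm]

theorem coeffwise_partialAntideriv (f : A →ₗ[K] A) (i : ι) (s : MvPowerSeries ι A) :
    coeffwise ι f (partialAntideriv K A i s) = partialAntideriv K A i (coeffwise ι f s) := by
  ext m
  simp [coeff_partialAntideriv]

theorem partialDeriv_partialAntideriv_of_ne {i j : ι} (hij : i ≠ j) (s : MvPowerSeries ι A) :
    partialDeriv K A i (partialAntideriv K A j s) =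
      partialAntideriv K A j (partialDeriv K A i s) := by
  ext m
  by_cases hj : m j = 0
  · simp [coeff_partialDeriv, coeff_partialAntideriv, hj, single_eq_of_ne hij.symm]
  have hle : single j 1 ≤ m := single_le_iff.mpr (Nat.one_le_iff_ne_zero.mpr hj)
  simp [coeff_partialDeriv, coeff_partialAntideriv, single_eq_of_ne hij, single_eq_of_ne hij.symm,
    smul_smul, mul_comm, tsub_add_eq_add_tsub hle]

theorem eq_C_of_partialDeriv_eq_zero [CharZero K] {s : MvPowerSeries ι A}
    (h : ∀ i, partialDeriv K A i s = 0) : s = C (constantCoeff s) := by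
  classical
  ext m
  rw [coeff_C]
  split_ifs with hm
  · rw [hm, coeff_zero_eq_constantCoeff]
  obtain ⟨i, hi⟩ := Finsupp.ne_iff.mp hm
  have hle : single i 1 ≤ m := single_le_iff.mpr (Nat.one_le_iff_ne_zero.mpr hi)
  have hcoeff := congrArg (coeff (m - single i 1)) (h i)
  rw [coeff_partialDeriv, tsub_add_cancel_of_le hle, map_zero] at hcoeff
  exact (smul_eq_zero.mp hcoeff).resolve_left (Nat.cast_add_one_ne_zero _)

end Antiderivatives

section Grading

variable {K A : Type*} [CommRing K] [Ring A] [Algebra K A] (𝒜 : ℕ → Submodule K A) [GradedAlgebra 𝒜]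

theorem proj_mem (k : ℕ) (a : A) : GradedAlgebra.proj 𝒜 k a ∈ 𝒜 k :=
  SetLike.coe_mem (DirectSum.decompose 𝒜 a k)

theorem proj_of_mem {k : ℕ} {a : A} (ha : a ∈ 𝒜 k) : GradedAlgebra.proj 𝒜 k a = a :=
  DirectSum.decompose_of_mem_same 𝒜 ha

theorem proj_of_mem_ne {j k : ℕ} {a : A} (ha : a ∈ 𝒜 j) (hjk : j ≠ k) :
    GradedAlgebra.proj 𝒜 k a = 0 :=
  DirectSum.decompose_of_mem_ne 𝒜 ha hjk

theorem ext_proj {a b : A} (h : ∀ k, GradedAlgebra.proj 𝒜 k a = GradedAlgebra.proj 𝒜 k b) :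
    a = b :=
  (DirectSum.decompose 𝒜).injective (DFinsupp.ext fun k ↦ Subtype.ext (h k))

/-- The decreasing filtration by degree: elements without homogeneous components of degree `< r`. -/
def filtration (r : ℕ) : Submodule K A :=
  ⨅ i, ⨅ _ : i < r, LinearMap.ker (GradedAlgebra.proj 𝒜 i)

variable {𝒜}

theorem mem_filtration {r : ℕ} {a : A} :
    a ∈ filtration 𝒜 r ↔ ∀ i < r, GradedAlgebra.proj 𝒜 i a = 0 := by
  simp [filtration]

theorem filtration_anti {r s : ℕ} (hrs : r ≤ s) : filtration 𝒜 s ≤ filtration 𝒜 r := fun _ ha ↦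
  mem_filtration.mpr fun i hi ↦ mem_filtration.mp ha i (hi.trans_le hrs)

theorem mem_filtration_zero (a : A) : a ∈ filtration 𝒜 0 :=
  mem_filtration.mpr fun _ hi ↦ absurd hi (Nat.not_lt_zero _)

theorem mem_filtration_of_mem {r k : ℕ} {a : A} (ha : a ∈ 𝒜 k) (hrk : r ≤ k) :
    a ∈ filtration 𝒜 r :=
  mem_filtration.mpr fun _ hi ↦ proj_of_mem_ne 𝒜 ha (hi.trans_le hrk).ne'

theorem mul_mem_filtration {r s : ℕ} {a b : A} (ha : a ∈ filtration 𝒜 r)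
    (hb : b ∈ filtration 𝒜 s) : a * b ∈ filtration 𝒜 (r + s) := by
  classical
  rw [← DirectSum.sum_support_decompose 𝒜 a, Finset.sum_mul]
  refine Submodule.sum_mem _ fun k _ ↦ mem_filtration.mpr fun i hi ↦ ?_
  have hk := SetLike.coe_mem (DirectSum.decompose 𝒜 a k)
  by_cases hkr : k < r
  · rw [← GradedAlgebra.proj_apply, mem_filtration.mp ha k hkr, zero_mul, map_zero]
  by_cases hki : k ≤ i
  · rw [GradedAlgebra.proj_apply, DirectSum.coe_decompose_mul_of_left_mem_of_le 𝒜 hk hki,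
      ← GradedAlgebra.proj_apply 𝒜 (i - k), mem_filtration.mp hb _ (by lia), mul_zero]
  · exact DirectSum.coe_decompose_mul_of_left_mem_of_not_le 𝒜 hk hki

theorem one_notMem_filtration_one [Nontrivial A] : (1 : A) ∉ filtration 𝒜 1 := fun h ↦
  one_ne_zero ((proj_of_mem 𝒜 SetLike.GradedOne.one_mem).symm.trans
    (mem_filtration.mp h 0 zero_lt_one))

variable (𝒜) in
theorem exists_filtration_eq_bot [IsNoetherian K A] : ∃ N, filtration 𝒜 N = ⊥ := by
  have hfin : {i | 𝒜 i ≠ ⊥}.Finite := WellFoundedGT.finite_ne_bot_of_iSupIndep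
    (DirectSum.Decomposition.isInternal 𝒜).submodule_iSupIndep
  obtain ⟨N, hN⟩ := hfin.bddAbove
  refine ⟨N + 1, (Submodule.eq_bot_iff _).mpr fun a ha ↦ ext_proj 𝒜 fun k ↦ ?_⟩
  rw [map_zero]
  by_cases hk : k < N + 1
  · exact mem_filtration.mp ha k hk
  · have hbot : 𝒜 k = ⊥ := by_contra fun h ↦ hk (Nat.lt_succ_of_le (hN h))
    exact (Submodule.mem_bot K).mp (hbot ▸ proj_mem 𝒜 k a)

end Grading

section CohomologyDegrees

variable {K A : Type*} [CommRing K] [Ring A] [Algebra K A] {𝒜 : ℕ → Submodule K A} [GradedAlgebra 𝒜]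
  {d : A →ₗ[K] A}

theorem proj_map (hd : ∀ r, ∀ a ∈ 𝒜 r, d a ∈ 𝒜 (r + 1)) (k : ℕ) (a : A) :
    GradedAlgebra.proj 𝒜 (k + 1) (d a) = d (GradedAlgebra.proj 𝒜 k a) := by
  induction a using DirectSum.Decomposition.inductionOn 𝒜 with
  | zero => simp
  | add a b ha hb => rw [map_add, map_add, ha, hb, map_add, map_add]
  | @homogeneous j a =>
    have hda := hd j a a.2
    obtain rfl | hjk := eq_or_ne j k
    · rw [proj_of_mem 𝒜 a.2, proj_of_mem 𝒜 hda]
    · rw [proj_of_mem_ne 𝒜 a.2 hjk, proj_of_mem_ne 𝒜 hda (by lia), map_zero]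

theorem map_mem_filtration_one (hd : ∀ r, ∀ a ∈ 𝒜 r, d a ∈ 𝒜 (r + 1)) (a : A) :
    d a ∈ filtration 𝒜 1 := by
  induction a using DirectSum.Decomposition.inductionOn 𝒜 with
  | zero => simp
  | add a b ha hb => exact map_add d a b ▸ add_mem ha hb
  | @homogeneous j a => exact mem_filtration_of_mem (hd j a a.2) (Nat.le_add_left 1 j)

theorem proj_mem_range (hd : ∀ r, ∀ a ∈ 𝒜 r, d a ∈ 𝒜 (r + 1)) (k : ℕ) {a : A}
    (ha : a ∈ LinearMap.range d) : GradedAlgebra.proj 𝒜 k a ∈ LinearMap.range d := by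
  obtain ⟨b, rfl⟩ := ha
  cases k with
  | zero =>
    rw [mem_filtration.mp (map_mem_filtration_one hd b) 0 zero_lt_one]
    exact zero_mem _
  | succ k => exact ⟨_, (proj_map hd k b).symm⟩

/-- The cohomology of `d`, for a square-zero `d`, encoded as in `cohomologyOf`. -/
abbrev Cohomology (d : A →ₗ[K] A) :=
  LinearMap.ker d ⧸ (LinearMap.range d).comap (LinearMap.ker d).subtype

/-- The degrees in which the complex `(A, d)` has nonzero cohomology. -/
def cohomologyDegrees (𝒜 : ℕ → Submodule K A) (d : A →ₗ[K] A) : Set ℕ :=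
  {r | ∃ a ∈ 𝒜 r, d a = 0 ∧ a ∉ LinearMap.range d}

theorem finite_cohomologyDegrees {N : ℕ} (hN : filtration 𝒜 N = ⊥) :
    (cohomologyDegrees 𝒜 d).Finite := by
  refine (Set.finite_Iio N).subset fun r ⟨a, har, _, ha⟩ ↦ Set.mem_Iio.mpr ?_
  refine by_contra fun hr ↦ ha ?_
  have ha0 : a ∈ filtration 𝒜 N := mem_filtration_of_mem har (not_lt.mp hr)
  rw [hN, Submodule.mem_bot] at ha0
  exact ha0 ▸ zero_mem _

end CohomologyDegrees

theorem card_le_rank_cohomology {K A : Type*} [Field K] [Ring A] [Algebra K A]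
    {𝒜 : ℕ → Submodule K A} [GradedAlgebra 𝒜] {d : A →ₗ[K] A}
    (hd : ∀ r, ∀ a ∈ 𝒜 r, d a ∈ 𝒜 (r + 1)) {T : Finset ℕ}
    (hT : ↑T ⊆ cohomologyDegrees 𝒜 d) : (T.card : Cardinal) ≤ Module.rank K (Cohomology d) := by
  choose a ha hda hna using fun r : T ↦ hT r.2
  let y (r : T) : Cohomology d := Submodule.Quotient.mk ⟨a r, hda r⟩
  have hy : LinearIndependent K y := by
    refine Fintype.linearIndependent_iff.mpr fun g hg r ↦ by_contra fun hgr ↦ hna r ?_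
    have hsum : ∑ s, g s • y s = Submodule.Quotient.mk (∑ s, g s • ⟨a s, hda s⟩) := by
      simp only [y, ← Submodule.mkQ_apply, map_sum, map_smul]
    rw [hsum, Submodule.Quotient.mk_eq_zero, Submodule.mem_comap] at hg
    have hproj : GradedAlgebra.proj 𝒜 r (∑ s, g s • a s) = g r • a r := by
      rw [map_sum, Finset.sum_eq_single_of_mem r (Finset.mem_univ r), map_smul,
        proj_of_mem 𝒜 (ha r)]
      intro s _ hsr
      rw [map_smul, proj_of_mem_ne 𝒜 (ha s) (Subtype.coe_ne_coe.mpr hsr), smul_zero]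
    refine ((LinearMap.range d).smul_mem_iff hgr).mp (hproj ▸ proj_mem_range hd r ?_)
    simpa using hg
  simpa using hy.cardinal_lift_le_rank

section ContractionFamilies

variable {K B : Type*} [CommRing K] [Ring B] [Algebra K B] {n : ℕ}

/-- The common kernel of the operators `c i` with `p ≤ i` (indices start at `0`). For contractions
or partial derivatives this is the subalgebra generated by the first `p` generators or variables. -/
def tailKernel (c : Fin n → B →ₗ[K] B) (p : ℕ) : Submodule K B :=
  ⨅ i : Fin n, ⨅ _ : p ≤ i, LinearMap.ker (c i)

theorem mem_tailKernel {c : Fin n → B →ₗ[K] B} {p : ℕ} {s : B} :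
    s ∈ tailKernel c p ↔ ∀ i : Fin n, p ≤ i → c i s = 0 := by
  simp [tailKernel]

theorem tailKernel_mono (c : Fin n → B →ₗ[K] B) {p r : ℕ} (hpr : p ≤ r) :
    tailKernel c p ≤ tailKernel c r := fun _ hs ↦
  mem_tailKernel.mpr fun i hi ↦ mem_tailKernel.mp hs i (hpr.trans hi)

/-- Pairwise anticommuting odd derivations, abstracting contractions with the coordinate forms of
a basis. -/
structure IsContractionFamily (σ : B →ₐ[K] B) (c : Fin n → B →ₗ[K] B) : Prop where
  isOddDerivation : ∀ i, IsOddDerivation σ (c i)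
  anticomm : ∀ i j s, c i (c j s) = -c j (c i s)

/-- An odd element dual to `c q` and independent of the later coordinates. The values `c i x` for
`i < q` are left free, since generators are corrected by terms in earlier generators. -/
structure IsDualTo (σ : B →ₐ[K] B) (c : Fin n → B →ₗ[K] B) (q : Fin n) (x : B) : Prop where
  odd : σ x = -x
  self : c q x = 1
  of_lt : ∀ i, q < i → c i x = 0

theorem IsDualTo.mem {σ : B →ₐ[K] B} {c : Fin n → B →ₗ[K] B} {q : Fin n} {x : B}
    (hx : IsDualTo σ c q x) : x ∈ tailKernel c (q + 1) :=
  mem_tailKernel.mpr fun i hi ↦ hx.of_lt i hi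

namespace IsContractionFamily

variable {σ : B →ₐ[K] B} {c : Fin n → B →ₗ[K] B} {p : ℕ}

theorem mul_mem (hc : IsContractionFamily σ c) {s t : B} (hs : s ∈ tailKernel c p)
    (ht : t ∈ tailKernel c p) : s * t ∈ tailKernel c p := by
  rw [mem_tailKernel] at *
  intro i hi
  rw [(hc.isOddDerivation i).leibniz, hs i hi, ht i hi, zero_mul, mul_zero, add_zero]

theorem one_mem (hc : IsContractionFamily σ c) : 1 ∈ tailKernel c p :=
  mem_tailKernel.mpr fun i _ ↦ (hc.isOddDerivation i).map_one

theorem parity_mem (hc : IsContractionFamily σ c) {s : B} (hs : s ∈ tailKernel c p) :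
    σ s ∈ tailKernel c p := by
  rw [mem_tailKernel] at *
  intro i hi
  rw [(hc.isOddDerivation i).map_parity, hs i hi, map_zero, neg_zero]

variable {q : Fin n} {x s : B}

theorem map_dual_mul (hc : IsContractionFamily σ c) (hx : IsDualTo σ c q x)
    (hs : s ∈ tailKernel c q) : c q (x * s) = s := by
  rw [(hc.isOddDerivation q).odd_mul hx.odd, hx.self, one_mul, mem_tailKernel.mp hs q le_rfl,
    mul_zero, sub_zero]

end IsContractionFamily

end ContractionFamilies

namespace IsContractionFamily

variable {K B : Type*} [Field K] [CharZero K] [Ring B] [Algebra K B] {n : ℕ} {σ : B →ₐ[K] B}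
  {c : Fin n → B →ₗ[K] B} {q : Fin n} {x s : B}

theorem map_mem (hc : IsContractionFamily σ c) (hs : s ∈ tailKernel c (q + 1)) :
    c q s ∈ tailKernel c q := mem_tailKernel.mpr fun i hi ↦ by
  obtain rfl | hiq := eq_or_ne i q
  · have h2 : (2 : K) • c i (c i s) = 0 := by
      rw [two_smul, ← eq_neg_iff_add_eq_zero]
      exact hc.anticomm i i s
    exact (smul_eq_zero.mp h2).resolve_left two_ne_zero
  · rw [hc.anticomm, mem_tailKernel.mp hs i (by lia), map_zero, neg_zero]

theorem sub_mul_mem (hc : IsContractionFamily σ c) (hx : IsDualTo σ c q x)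
    (hs : s ∈ tailKernel c (q + 1)) : s - x * c q s ∈ tailKernel c q :=
  mem_tailKernel.mpr fun i hi ↦ by
    rw [map_sub, (hc.isOddDerivation i).odd_mul hx.odd, mem_tailKernel.mp (hc.map_mem hs) i hi]
    obtain rfl | hiq := eq_or_ne i q
    · rw [hx.self, one_mul, mul_zero, sub_zero, sub_self]
    · rw [mem_tailKernel.mp hs i (by lia), hx.of_lt i (by lia), zero_mul, mul_zero, sub_zero,
        sub_zero]

end IsContractionFamily

section ExteriorAlgebra

open ExteriorAlgebra

variable {K V : Type*} [CommRing K] [AddCommGroup V] [Module K V]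

/-- The grading involution of the exterior algebra, for the parity of word length. -/
noncomputable def parity (K V : Type*) [CommRing K] [AddCommGroup V] [Module K V] :
    ExteriorAlgebra K V →ₐ[K] ExteriorAlgebra K V :=
  CliffordAlgebra.involute (Q := (0 : QuadraticForm K V))

/-- Interior product with a linear form. -/
noncomputable def contraction (l : Module.Dual K V) :
    ExteriorAlgebra K V →ₗ[K] ExteriorAlgebra K V :=
  CliffordAlgebra.contractLeft (Q := (0 : QuadraticForm K V)) l

@[elab_as_elim]
theorem exterior_induction {P : ExteriorAlgebra K V → Prop} (scalar : ∀ q : K, P (q • 1))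
    (add : ∀ a b, P a → P b → P (a + b)) (ι_mul : ∀ v a, P a → P (ι K v * a))
    (a : ExteriorAlgebra K V) : P a :=
  CliffordAlgebra.left_induction (Q := (0 : QuadraticForm K V)) (P := P)
    (fun q ↦ Algebra.algebraMap_eq_smul_one (A := ExteriorAlgebra K V) q ▸ scalar q) add
    (fun a v ha ↦ ι_mul v a ha) a

@[simp]
theorem parity_ι (v : V) : parity K V (ι K v) = -ι K v :=
  CliffordAlgebra.involute_ι (Q := (0 : QuadraticForm K V)) v

theorem parity_parity (a : ExteriorAlgebra K V) : parity K V (parity K V a) = a :=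
  CliffordAlgebra.involute_involute (Q := (0 : QuadraticForm K V)) a

@[simp]
theorem contraction_one (l : Module.Dual K V) : contraction l 1 = 0 :=
  CliffordAlgebra.contractLeft_one (Q := (0 : QuadraticForm K V)) l

theorem contraction_ι (l : Module.Dual K V) (v : V) : contraction l (ι K v) = l v • 1 :=
  (CliffordAlgebra.contractLeft_ι (Q := (0 : QuadraticForm K V)) l v).trans
    (Algebra.algebraMap_eq_smul_one _)

theorem contraction_ι_mul (l : Module.Dual K V) (v : V) (a : ExteriorAlgebra K V) :
    contraction l (ι K v * a) = l v • a - ι K v * contraction l a :=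
  CliffordAlgebra.contractLeft_ι_mul (Q := (0 : QuadraticForm K V)) l v a

theorem contraction_anticomm (l l' : Module.Dual K V) (a : ExteriorAlgebra K V) :
    contraction l (contraction l' a) = -contraction l' (contraction l a) :=
  CliffordAlgebra.contractLeft_comm (Q := (0 : QuadraticForm K V)) l l' a

theorem isOddDerivation_of_ι {D : ExteriorAlgebra K V →ₗ[K] ExteriorAlgebra K V} (h_one : D 1 = 0)
    (h_mul : ∀ v a, D (ι K v * a) = D (ι K v) * a - ι K v * D a)
    (h_even : ∀ v, parity K V (D (ι K v)) = D (ι K v)) : IsOddDerivation (parity K V) D where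
  leibniz a b := by
    induction a using exterior_induction with
    | scalar q => simp [h_one]
    | add a a' ha ha' => simp only [add_mul, map_add, ha, ha']; abel
    | ι_mul v a ha =>
      rw [mul_assoc, h_mul, ha, h_mul, map_mul, parity_ι]
      noncomm_ring
  map_parity a := by
    induction a using exterior_induction with
    | scalar q => simp [h_one]
    | add a a' ha ha' => simp only [map_add, ha, ha']; abel
    | ι_mul v a ha =>
      rw [map_mul, parity_ι, neg_mul, map_neg, h_mul, ha, h_mul, map_sub, map_mul, map_mul,
        parity_ι, h_even]
      noncomm_ring

theorem isOddDerivation_contraction (l : Module.Dual K V) :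
    IsOddDerivation (parity K V) (contraction l) :=
  isOddDerivation_of_ι (contraction_one l)
    (fun v a ↦ by rw [contraction_ι_mul, contraction_ι, smul_one_mul])
    (fun v ↦ by rw [contraction_ι, map_smul, map_one])

theorem isContractionFamily_contraction {n : ℕ} (b : Module.Basis (Fin n) K V) :
    IsContractionFamily (parity K V) fun i ↦ contraction (b.coord i) where
  isOddDerivation i := isOddDerivation_contraction (b.coord i)
  anticomm _ _ := contraction_anticomm _ _

theorem isDualTo_ι {n : ℕ} (b : Module.Basis (Fin n) K V) (q : Fin n) :
    IsDualTo (parity K V) (fun i ↦ contraction (b.coord i)) q (ι K (b q)) where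
  odd := parity_ι _
  self := by simp [contraction_ι]
  of_lt i hi := by simp [contraction_ι, hi.ne]

theorem ι_mul_eq_parity_mul_ι (v : V) (a : ExteriorAlgebra K V) :
    ι K v * a = parity K V a * ι K v := by
  induction a using exterior_induction with
  | scalar q => simp
  | add a b ha hb => rw [mul_add, ha, hb, map_add, add_mul]
  | ι_mul w a ha =>
    have hvw : ι K v * ι K w = -(ι K w * ι K v) := eq_neg_of_add_eq_zero_left (ι_add_mul_swap v w)
    rw [map_mul, parity_ι, ← mul_assoc, hvw, neg_mul, mul_assoc, ha, neg_mul, neg_mul, mul_assoc]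

theorem isSupercommutative_parity : IsSupercommutative (parity K V) where
  involutive := parity_parity
  odd_mul e a he := by
    induction a using exterior_induction with
    | scalar q => simp
    | add a b ha hb => rw [mul_add, ha, hb, map_add, add_mul]
    | ι_mul w a ha =>
      have hew : e * ι K w = -(ι K w * e) := by rw [ι_mul_eq_parity_mul_ι w e, he, neg_mul, neg_neg]
      rw [map_mul, parity_ι, ← mul_assoc, hew, neg_mul, mul_assoc, ha, neg_mul, neg_mul, mul_assoc]

theorem sum_ι_mul_contraction {n : ℕ} (b : Module.Basis (Fin n) K V) {k : ℕ}
    {a : ExteriorAlgebra K V} (ha : a ∈ ⋀[K]^k V) :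
    ∑ i, ι K (b i) * contraction (b.coord i) a = (k : K) • a := by
  induction ha using Submodule.pow_induction_on_left' with
  | algebraMap r => simp [Algebra.algebraMap_eq_smul_one]
  | add a a' k _ _ ha ha' => simp only [map_add, mul_add, Finset.sum_add_distrib, ha, ha', smul_add]
  | mem_mul m hm k a _ ha =>
    obtain ⟨v, rfl⟩ := hm
    have hv : ∑ i, b.coord i v • ι K (b i) = ι K v := by
      conv_rhs => rw [← b.sum_repr v, map_sum]
      simp only [Module.Basis.coord_apply, map_smul]
    have hswap (i : Fin n) : ι K (b i) * (ι K v * contraction (b.coord i) a) =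
        -(ι K v * (ι K (b i) * contraction (b.coord i) a)) := by
      rw [← mul_assoc, eq_neg_of_add_eq_zero_left (ι_add_mul_swap (b i) v), neg_mul, mul_assoc]
    simp only [contraction_ι_mul, mul_sub, Finset.sum_sub_distrib, hswap, Finset.sum_neg_distrib,
      ← Finset.mul_sum, ha, mul_smul_comm, ← smul_mul_assoc, ← Finset.sum_mul, hv]
    push_cast
    simp only [add_mul, add_smul, one_smul, smul_mul_assoc]
    abel

end ExteriorAlgebra

open ExteriorAlgebra in
theorem exists_eq_smul_one_of_contraction_eq_zero {K V : Type*} [Field K] [CharZero K]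
    [AddCommGroup V] [Module K V] {n : ℕ} (b : Module.Basis (Fin n) K V) {a : ExteriorAlgebra K V}
    (ha : ∀ i, contraction (b.coord i) a = 0) : ∃ q : K, a = q • 1 := by
  let 𝒢 : ℕ → Submodule K (ExteriorAlgebra K V) := fun k ↦ ⋀[K]^k V
  -- The Euler operator `E` acts on words of length `k` as multiplication by `k`.
  let E : ExteriorAlgebra K V →ₗ[K] ExteriorAlgebra K V :=
    ∑ i, LinearMap.mulLeft K (ι K (b i)) ∘ₗ contraction (b.coord i)
  have hE (a : ExteriorAlgebra K V) (k : ℕ) :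
      GradedAlgebra.proj 𝒢 k (E a) = (k : K) • GradedAlgebra.proj 𝒢 k a := by
    induction a using DirectSum.Decomposition.inductionOn 𝒢 with
    | zero => simp
    | add a a' ha ha' => rw [map_add, map_add, ha, ha', map_add, smul_add]
    | @homogeneous j a =>
      have hEa : E a = (j : K) • (a : ExteriorAlgebra K V) := by
        simpa [E] using sum_ι_mul_contraction b a.2
      obtain rfl | hjk := eq_or_ne j k
      · rw [hEa, map_smul]
      · rw [hEa, map_smul, proj_of_mem_ne 𝒢 a.2 hjk, smul_zero, smul_zero]
  have hproj (k : ℕ) (hk : k ≠ 0) : GradedAlgebra.proj 𝒢 k a = 0 := by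
    have hEa : E a = 0 := by simp [E, ha]
    have h := hE a k
    rw [hEa, map_zero, eq_comm, smul_eq_zero] at h
    exact h.resolve_left (Nat.cast_ne_zero.mpr hk)
  have ha0 : a = GradedAlgebra.proj 𝒢 0 a := ext_proj 𝒢 fun k ↦ by
    obtain rfl | hk := eq_or_ne k 0
    · exact (proj_of_mem 𝒢 (proj_mem 𝒢 0 a)).symm
    · rw [hproj k hk, proj_of_mem_ne 𝒢 (proj_mem 𝒢 0 a) hk.symm]
  obtain ⟨q, hq⟩ : a ∈ (1 : Submodule K (ExteriorAlgebra K V)) := by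
    rw [← pow_zero (LinearMap.range (ι K : V →ₗ[K] ExteriorAlgebra K V)), ha0]
    exact proj_mem 𝒢 0 a
  exact ⟨q, hq.symm⟩

section SullivanPresentation

variable {K A : Type*} [Field K] [Ring A] [Algebra K A] {n : ℕ}
  {𝒜 : ℕ → Submodule K A} [GradedAlgebra 𝒜] {σ : A →ₐ[K] A} {c : Fin n → A →ₗ[K] A} {x : Fin n → A}
  {d : A →ₗ[K] A}

/-- A graded-commutative differential algebra of bounded degree, with free odd generators `x i` in
the order of a Sullivan filtration: `d (x i)` involves only the generators before `x i`.
Freeness is expressed through the contractions `c i`, and odd elements have no components of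
degree `0` or `1`. -/
structure IsSullivanPresentation (𝒜 : ℕ → Submodule K A) [GradedAlgebra 𝒜] (σ : A →ₐ[K] A)
    (c : Fin n → A →ₗ[K] A) (x : Fin n → A) (d : A →ₗ[K] A) : Prop where
  isSupercommutative : IsSupercommutative σ
  isContractionFamily : IsContractionFamily σ c
  isDualTo : ∀ i, IsDualTo σ c i (x i)
  eq_smul_one : ∀ a ∈ tailKernel c 0, ∃ q : K, a = q • 1
  isOddDerivation : IsOddDerivation σ d
  square_zero : ∀ a, d (d a) = 0
  map_generator : ∀ i : Fin n, d (x i) ∈ tailKernel c i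
  map_degree : ∀ r, ∀ a ∈ 𝒜 r, d a ∈ 𝒜 (r + 1)
  odd_mem_filtration : ∀ a, σ a = -a → a ∈ filtration 𝒜 2
  exists_filtration_eq_bot : ∃ N, filtration 𝒜 N = ⊥

/-- The product of the first `p` generators, in order. -/
def volume (x : Fin n → A) (p : ℕ) : A :=
  ((List.ofFn x).take p).prod

theorem volume_zero (x : Fin n → A) : volume x 0 = 1 := by
  simp [volume]

theorem volume_succ (x : Fin n → A) (q : Fin n) : volume x (q + 1) = volume x q * x q := by
  rw [volume, volume, List.prod_take_succ _ _ (by simp), List.getElem_ofFn]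

namespace IsSullivanPresentation

theorem volume_mem (H : IsSullivanPresentation 𝒜 σ c x d) {p : ℕ} (hp : p ≤ n) :
    volume x p ∈ tailKernel c p := by
  induction p with
  | zero => exact volume_zero x ▸ H.isContractionFamily.one_mem
  | succ q ih =>
    lift q to Fin n using hp
    rw [volume_succ]
    exact H.isContractionFamily.mul_mem (tailKernel_mono c q.val.le_succ (ih q.is_le'))
      (H.isDualTo q).mem

variable [CharZero K]

theorem volume_mul_eq_zero_of_odd (H : IsSullivanPresentation 𝒜 σ c x d) {p : ℕ}
    (hp : p ≤ n) {a : A} (ha : a ∈ tailKernel c p) (hodd : σ a = -a) :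
    volume x p * a = 0 := by
  induction p generalizing a with
  | zero =>
    obtain ⟨q, rfl⟩ := H.eq_smul_one a ha
    rw [map_smul, map_one, eq_neg_iff_add_eq_zero, ← two_smul K] at hodd
    rw [(smul_eq_zero.mp hodd).resolve_left two_ne_zero, mul_zero]
  | succ q ih =>
    lift q to Fin n using hp
    have hx := (H.isDualTo q).odd
    have hrest_odd : σ (a - x q * c q a) = -(a - x q * c q a) := by
      have hca : σ (c q a) = c q a := by
        rw [← neg_inj, ← (H.isContractionFamily.isOddDerivation q).map_parity, hodd, map_neg]
      rw [map_sub, map_mul, hx, hca, hodd, neg_mul, neg_sub_neg, neg_sub]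
    have hrest : volume x q * (a - x q * c q a) = 0 :=
      ih q.is_le' (H.isContractionFamily.sub_mul_mem (H.isDualTo q) ha) hrest_odd
    calc volume x (q + 1) * a
        = volume x q * (x q * (a - x q * c q a)) +
            volume x q * (x q * (x q * c q a)) := by
          rw [volume_succ, mul_assoc, ← mul_add, ← mul_add, sub_add_cancel]
      _ = -(volume x q * (a - x q * c q a) * x q) := by
          rw [H.isSupercommutative.odd_mul_mul_self hx, mul_zero, add_zero,
            H.isSupercommutative.odd_mul _ _ hx, hrest_odd, neg_mul, mul_neg, mul_assoc]
      _ = 0 := by rw [hrest, zero_mul, neg_zero]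

theorem map_mem_tailKernel (H : IsSullivanPresentation 𝒜 σ c x d) {p : ℕ} {a : A}
    (ha : a ∈ tailKernel c p) : d a ∈ tailKernel c p := by
  induction p generalizing a with
  | zero =>
    obtain ⟨q, rfl⟩ := H.eq_smul_one a ha
    rw [map_smul, H.isOddDerivation.map_one, smul_zero]
    exact zero_mem _
  | succ q ih =>
    by_cases hq : q < n
    · lift q to Fin n using hq
      have hc := H.isContractionFamily
      have hx := H.isDualTo q
      have hmono := tailKernel_mono c q.val.le_succ
      rw [← sub_add_cancel a (x q * c q a), map_add, H.isOddDerivation.odd_mul hx.odd]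
      exact add_mem (hmono (ih (hc.sub_mul_mem hx ha))) <| sub_mem
        (hmono (hc.mul_mem (H.map_generator q) (hc.map_mem ha)))
        (hc.mul_mem hx.mem (hmono (ih (hc.map_mem ha))))
    · exact mem_tailKernel.mpr fun i hi ↦ absurd i.isLt (by lia)

theorem map_ne_volume [Nontrivial A] (H : IsSullivanPresentation 𝒜 σ c x d) {p : ℕ}
    (hp : p ≤ n) {a : A} (ha : a ∈ tailKernel c p) : d a ≠ volume x p := by
  induction p generalizing a with
  | zero =>
    obtain ⟨q, rfl⟩ := H.eq_smul_one a ha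
    rw [map_smul, H.isOddDerivation.map_one, smul_zero, volume_zero]
    exact zero_ne_one
  | succ q ih =>
    lift q to Fin n using hp
    intro hda
    have hc := H.isContractionFamily
    have hx := H.isDualTo q
    have hcd : c q (d a) = -d (c q a) := by
      have hsplit : d a = d (a - x q * c q a) + (d (x q) * c q a - x q * d (c q a)) := by
        rw [← H.isOddDerivation.odd_mul hx.odd, ← map_add, sub_add_cancel]
      have hrest := mem_tailKernel.mp (H.map_mem_tailKernel (hc.sub_mul_mem hx ha)) q le_rfl
      have hdx := mem_tailKernel.mp (hc.mul_mem (H.map_generator q) (hc.map_mem ha)) q le_rfl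
      rw [hsplit, map_add, hrest, map_sub, hdx,
        hc.map_dual_mul hx (H.map_mem_tailKernel (hc.map_mem ha)), zero_add, zero_sub]
    have hcω : c q (volume x (q + 1)) = σ (volume x q) := by
      rw [volume_succ, (hc.isOddDerivation q).leibniz, hx.self, mul_one,
        mem_tailKernel.mp (H.volume_mem q.is_le') q le_rfl, zero_mul, zero_add]
    refine ih q.is_le' (hc.parity_mem (hc.map_mem ha)) ?_
    rw [H.isOddDerivation.map_parity, ← map_neg, ← hcd, hda, hcω,
      H.isSupercommutative.involutive]

end IsSullivanPresentation

end SullivanPresentation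

section CoefficientwiseStructure

open MvPowerSeries

variable {K A : Type*} [CommRing K] [Ring A] [Algebra K A] {n : ℕ}
  {𝒜 : ℕ → Submodule K A} [GradedAlgebra 𝒜] {σ : A →ₐ[K] A} {c : Fin n → A →ₗ[K] A}

theorem IsContractionFamily.coeffwise (hc : IsContractionFamily σ c) :
    IsContractionFamily (mapAlgHom (σ := Fin n) σ) fun i ↦ coeffwise (Fin n) (c i) where
  isOddDerivation i := (hc.isOddDerivation i).coeffwise
  anticomm i j s := by
    ext m
    simp [hc.anticomm i j]

theorem IsDualTo.C {q : Fin n} {a : A} (ha : IsDualTo σ c q a) :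
    IsDualTo (mapAlgHom (σ := Fin n) σ) (fun i ↦ coeffwise (Fin n) (c i)) q (C a) where
  odd := by
    rw [← map_neg, ← ha.odd]
    exact MvPowerSeries.map_C σ.toRingHom a
  self := by rw [coeffwise_C, ha.self, map_one]
  of_lt i hi := by rw [coeffwise_C, ha.of_lt i hi, map_zero]

/-- Power series with all coefficients in `filtration 𝒜 r`; the variables have degree zero. -/
def coeffFiltration (𝒜 : ℕ → Submodule K A) [GradedAlgebra 𝒜] (n r : ℕ) :
    Submodule K (MvPowerSeries (Fin n) A) where
  carrier := {s | ∀ m, coeff m s ∈ filtration 𝒜 r}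
  add_mem' hs ht m := add_mem (hs m) (ht m)
  zero_mem' _ := zero_mem _
  smul_mem' k _ hs m := Submodule.smul_mem _ k (hs m)

theorem coeffFiltration_anti {r t : ℕ} (hrt : r ≤ t) :
    coeffFiltration 𝒜 n t ≤ coeffFiltration 𝒜 n r :=
  fun _ hs m ↦ filtration_anti hrt (hs m)

theorem mul_mem_coeffFiltration {r t : ℕ} {s u : MvPowerSeries (Fin n) A}
    (hs : s ∈ coeffFiltration 𝒜 n r) (hu : u ∈ coeffFiltration 𝒜 n t) :
    s * u ∈ coeffFiltration 𝒜 n (r + t) := fun m ↦ by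
  classical
  rw [coeff_mul]
  exact sum_mem fun k _ ↦ mul_mem_filtration (hs k.1) (hu k.2)

theorem partialDeriv_mem_coeffFiltration {r : ℕ} {s : MvPowerSeries (Fin n) A}
    (hs : s ∈ coeffFiltration 𝒜 n r) (i : Fin n) :
    partialDeriv K A i s ∈ coeffFiltration 𝒜 n r := fun m ↦ by
  rw [coeff_partialDeriv]
  exact Submodule.smul_mem _ _ (hs _)

theorem coeffwise_mem_tailKernel {p : ℕ} {s : MvPowerSeries (Fin n) A}
    (hs : s ∈ tailKernel (partialDeriv K A) p) (f : A →ₗ[K] A) :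
    coeffwise (Fin n) f s ∈ tailKernel (partialDeriv K A) p :=
  mem_tailKernel.mpr fun i hi ↦ by
    rw [← coeffwise_partialDeriv, mem_tailKernel.mp hs i hi, map_zero]

theorem partialDeriv_mem_tailKernel {p : ℕ} {s : MvPowerSeries (Fin n) A}
    (hs : s ∈ tailKernel (fun i ↦ coeffwise (Fin n) (c i)) p) (q : Fin n) :
    partialDeriv K A q s ∈ tailKernel (fun i ↦ coeffwise (Fin n) (c i)) p :=
  mem_tailKernel.mpr fun i hi ↦ by
    rw [coeffwise_partialDeriv, mem_tailKernel.mp hs i hi, map_zero]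

/-- The subalgebra of power series in the first `p` variables whose coefficients involve only the
first `p` generators. -/
noncomputable def koszulAlgebra (c : Fin n → A →ₗ[K] A) (p : ℕ) :
    Submodule K (MvPowerSeries (Fin n) A) :=
  tailKernel (fun i ↦ coeffwise (Fin n) (c i)) p ⊓ tailKernel (partialDeriv K A) p

end CoefficientwiseStructure

section KoszulStages

open MvPowerSeries

variable {K A : Type*} [Field K] [Ring A] [Algebra K A] {n : ℕ}
  {𝒜 : ℕ → Submodule K A} [GradedAlgebra 𝒜] {σ : A →ₐ[K] A} {c : Fin n → A →ₗ[K] A} {x : Fin n → A}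
  {d : A →ₗ[K] A}

theorem partialAntideriv_mem_tailKernel {p : ℕ} {s : MvPowerSeries (Fin n) A}
    (hs : s ∈ tailKernel (fun i ↦ coeffwise (Fin n) (c i)) p) (q : Fin n) :
    partialAntideriv K A q s ∈ tailKernel (fun i ↦ coeffwise (Fin n) (c i)) p :=
  mem_tailKernel.mpr fun i hi ↦ by
    rw [coeffwise_partialAntideriv, mem_tailKernel.mp hs i hi, map_zero]

/-- A differential on power series which extends `d`, agrees with it up to terms raising the degree
filtration by `2`, involves only the first `p` variables and resolves `K` on `koszulAlgebra c p`. -/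
structure IsKoszulDifferential (𝒜 : ℕ → Submodule K A) [GradedAlgebra 𝒜] (σ : A →ₐ[K] A)
    (c : Fin n → A →ₗ[K] A) (d : A →ₗ[K] A) (p : ℕ)
    (D : MvPowerSeries (Fin n) A →ₗ[K] MvPowerSeries (Fin n) A) : Prop where
  isOddDerivation : IsOddDerivation (mapAlgHom σ) D
  square_zero : ∀ s, D (D s) = 0
  map_C : ∀ a, D (C a) = C (d a)
  partialDeriv_map : ∀ i : Fin n, p ≤ i → ∀ s,
    partialDeriv K A i (D s) = D (partialDeriv K A i s)
  map_mem_tailKernel : ∀ r, p ≤ r → ∀ s ∈ tailKernel (fun i ↦ coeffwise (Fin n) (c i)) r,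
    D s ∈ tailKernel (fun i ↦ coeffwise (Fin n) (c i)) r
  sub_coeffwise_mem : ∀ r, ∀ s ∈ coeffFiltration 𝒜 n r,
    D s - coeffwise (Fin n) d s ∈ coeffFiltration 𝒜 n (r + 2)
  acyclic : ∀ s ∈ koszulAlgebra c p, D s = 0 → ∃ k : K, ∃ w ∈ koszulAlgebra c p, s = k • 1 + D w

namespace IsSullivanPresentation

theorem isKoszulDifferential_zero [CharZero K] (H : IsSullivanPresentation 𝒜 σ c x d) :
    IsKoszulDifferential 𝒜 σ c d 0 (coeffwise (Fin n) d) where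
  isOddDerivation := H.isOddDerivation.coeffwise
  square_zero s := by
    ext m
    exact H.square_zero _
  map_C a := coeffwise_C d a
  partialDeriv_map i _ s := (coeffwise_partialDeriv d i s).symm
  map_mem_tailKernel r _ s hs := mem_tailKernel.mpr fun i hi ↦ by
    ext m
    refine mem_tailKernel.mp (H.map_mem_tailKernel (mem_tailKernel.mpr fun j hj ↦ ?_)) i hi
    exact congrArg (coeff m) (mem_tailKernel.mp hs j hj)
  sub_coeffwise_mem r s _ := by simp
  acyclic s hs _ := by
    obtain ⟨hsc, hsd⟩ := hs
    obtain ⟨a, rfl⟩ : ∃ a, s = C a :=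
      ⟨_, eq_C_of_partialDeriv_eq_zero fun i ↦ mem_tailKernel.mp hsd i i.val.zero_le⟩
    obtain ⟨k, rfl⟩ := H.eq_smul_one a <| mem_tailKernel.mpr fun i hi ↦
      C_injective (by rw [← coeffwise_C, mem_tailKernel.mp hsc i hi, map_zero])
    refine ⟨k, 0, zero_mem _, ?_⟩
    rw [map_zero, add_zero, ← Algebra.algebraMap_eq_smul_one, ← Algebra.algebraMap_eq_smul_one,
      MvPowerSeries.algebraMap_apply]

theorem exists_mem_map_eq (H : IsSullivanPresentation 𝒜 σ c x d) {r : ℕ}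
    (hr : r + 1 ∉ cohomologyDegrees 𝒜 d) {a : A} (ha : a ∈ 𝒜 (r + 1)) (hda : d a = 0) :
    ∃ b ∈ 𝒜 r, d b = a := by
  obtain ⟨b, hb⟩ : a ∈ LinearMap.range d := by_contra fun h ↦ hr ⟨a, ha, hda, h⟩
  refine ⟨GradedAlgebra.proj 𝒜 r b, proj_mem 𝒜 r b, ?_⟩
  rw [← proj_map H.map_degree, hb, proj_of_mem 𝒜 ha]

theorem zero_mem_cohomologyDegrees [Nontrivial A] (H : IsSullivanPresentation 𝒜 σ c x d) :
    0 ∈ cohomologyDegrees 𝒜 d := by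
  refine ⟨1, SetLike.GradedOne.one_mem, H.isOddDerivation.map_one, ?_⟩
  rintro ⟨b, hb⟩
  exact one_notMem_filtration_one (𝒜 := 𝒜) (hb ▸ map_mem_filtration_one H.map_degree b)

end IsSullivanPresentation

namespace IsKoszulDifferential

variable {p : ℕ} {D : MvPowerSeries (Fin n) A →ₗ[K] MvPowerSeries (Fin n) A}

theorem map_mem_coeffFiltration_one (hD : IsKoszulDifferential 𝒜 σ c d p D)
    (H : IsSullivanPresentation 𝒜 σ c x d) (s : MvPowerSeries (Fin n) A) :
    D s ∈ coeffFiltration 𝒜 n 1 := by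
  rw [← sub_add_cancel (D s) (coeffwise (Fin n) d s)]
  exact add_mem
    (coeffFiltration_anti one_le_two (hD.sub_coeffwise_mem 0 s fun m ↦ mem_filtration_zero _))
    fun m ↦ map_mem_filtration_one H.map_degree _

theorem exists_sub_map_mem_coeffFiltration [Nontrivial A] (hD : IsKoszulDifferential 𝒜 σ c d p D)
    (H : IsSullivanPresentation 𝒜 σ c x d) {r : ℕ} (hr : r ∉ cohomologyDegrees 𝒜 d)
    {z : MvPowerSeries (Fin n) A} (hz : z ∈ coeffFiltration 𝒜 n r) (hDz : D z = 0) :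
    ∃ s, z - D s ∈ coeffFiltration 𝒜 n (r + 1) := by
  obtain ⟨r, rfl⟩ := Nat.exists_eq_succ_of_ne_zero
    (ne_of_mem_of_not_mem H.zero_mem_cohomologyDegrees hr).symm
  have hleading (m : Fin n →₀ ℕ) : d (GradedAlgebra.proj 𝒜 (r + 1) (coeff m z)) = 0 := by
    have h := mem_filtration.mp (hD.sub_coeffwise_mem _ z hz m) (r + 2) (Nat.lt_succ_self _)
    rwa [hDz, zero_sub, map_neg, map_neg, coeff_coeffwise, proj_map H.map_degree, neg_eq_zero] at h
  obtain ⟨b, hb, hdb⟩ : ∃ b : MvPowerSeries (Fin n) A, (∀ m, coeff m b ∈ 𝒜 r) ∧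
      ∀ m, d (coeff m b) = GradedAlgebra.proj 𝒜 (r + 1) (coeff m z) := by
    choose b hb hdb using fun m ↦ H.exists_mem_map_eq hr (proj_mem 𝒜 _ _) (hleading m)
    exact ⟨b, hb, hdb⟩
  have hbJ : b ∈ coeffFiltration 𝒜 n r := fun m ↦ mem_filtration_of_mem (hb m) le_rfl
  refine ⟨b, ?_⟩
  rw [← sub_sub_sub_cancel_right z (D b) (coeffwise (Fin n) d b)]
  refine sub_mem (fun m ↦ mem_filtration.mpr fun i hi ↦ ?_) (hD.sub_coeffwise_mem r b hbJ)
  rw [map_sub, coeff_coeffwise, hdb, map_sub]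
  obtain rfl | hir := eq_or_ne i (r + 1)
  · rw [proj_of_mem 𝒜 (proj_mem 𝒜 _ _), sub_self]
  · rw [mem_filtration.mp (hz m) i (by lia), proj_of_mem_ne 𝒜 (proj_mem 𝒜 _ _) hir.symm, sub_zero]

theorem map_mem_range_of_forall_mem [Nontrivial A] (hD : IsKoszulDifferential 𝒜 σ c d p D)
    (H : IsSullivanPresentation 𝒜 σ c x d) {f : MvPowerSeries (Fin n) A →ₗ[K] A}
    (hf : ∀ s, f (D s) ∈ LinearMap.range d) (r : ℕ)
    (hT : ∀ t ∈ cohomologyDegrees 𝒜 d, r ≤ t → ∀ z ∈ coeffFiltration 𝒜 n t, D z = 0 →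
      f z ∈ LinearMap.range d)
    {z : MvPowerSeries (Fin n) A} (hz : z ∈ coeffFiltration 𝒜 n r) (hDz : D z = 0) :
    f z ∈ LinearMap.range d := by
  obtain ⟨N, hN⟩ := H.exists_filtration_eq_bot
  induction hk : N - r generalizing r z with
  | zero =>
    have hz0 : z = 0 := by
      ext m
      exact (Submodule.mem_bot K).mp (hN ▸ filtration_anti (Nat.sub_eq_zero_iff_le.mp hk) (hz m))
    rw [hz0, map_zero]
    exact zero_mem _
  | succ k ih =>
    by_cases hr : r ∈ cohomologyDegrees 𝒜 d
    · exact hT r hr le_rfl z hz hDz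
    obtain ⟨s, hs⟩ := hD.exists_sub_map_mem_coeffFiltration H hr hz hDz
    rw [← sub_add_cancel z (D s), map_add]
    refine add_mem (ih (r + 1) (fun t ht hrt ↦ hT t ht (by lia)) hs ?_ (by lia)) (hf s)
    rw [map_sub, hDz, hD.square_zero, sub_zero]

variable {q : Fin n}

theorem exists_odd_correction [CharZero K] [Nontrivial A]
    (hD : IsKoszulDifferential 𝒜 σ c d q D) (H : IsSullivanPresentation 𝒜 σ c x d) :
    ∃ φ ∈ koszulAlgebra c q, mapAlgHom σ φ = -φ ∧ D φ = -C (d (x q)) := by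
  have hK : C (d (x q)) ∈ koszulAlgebra c q :=
    ⟨mem_tailKernel.mpr fun i hi ↦ by
      rw [coeffwise_C, mem_tailKernel.mp (H.map_generator q) i hi, map_zero],
    mem_tailKernel.mpr fun i _ ↦ partialDeriv_C i _⟩
  obtain ⟨k, w, hw, hkw⟩ := hD.acyclic _ hK (by rw [hD.map_C, H.square_zero, map_zero])
  have hDw : D w = C (d (x q)) := by
    have hk : k • (1 : MvPowerSeries (Fin n) A) ∈ coeffFiltration 𝒜 n 1 := by
      rw [eq_sub_of_add_eq hkw.symm, ← hD.map_C]
      exact sub_mem (hD.map_mem_coeffFiltration_one H _) (hD.map_mem_coeffFiltration_one H _)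
    have hk0 : k = 0 := by
      by_contra h
      refine one_notMem_filtration_one (𝒜 := 𝒜) ?_
      simpa using ((coeffFiltration 𝒜 n 1).smul_mem_iff h).mp hk 0
    rw [hkw, hk0, zero_smul, zero_add]
  have hσC : mapAlgHom (σ := Fin n) σ (C (d (x q))) = C (d (x q)) := by
    refine (MvPowerSeries.map_C σ.toRingHom _).trans (congrArg C ?_)
    rw [← neg_inj]
    exact (H.isOddDerivation.map_parity _).symm.trans (by rw [(H.isDualTo q).odd, map_neg])
  have hσw : mapAlgHom σ w ∈ koszulAlgebra c q :=
    ⟨H.isContractionFamily.coeffwise.parity_mem hw.1, mem_tailKernel.mpr fun i hi ↦ by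
      rw [← mapAlgHom_partialDeriv, mem_tailKernel.mp hw.2 i hi, map_zero]⟩
  -- `d (x q)` is even, so the odd part of its primitive `w` is again a primitive.
  refine ⟨(-2⁻¹ : K) • (w - mapAlgHom σ w), Submodule.smul_mem _ _ (sub_mem hw hσw), ?_, ?_⟩
  · rw [map_smul, map_sub, H.isSupercommutative.mapAlgHom.involutive, ← smul_neg, neg_sub]
  · rw [map_smul, map_sub, hD.isOddDerivation.map_parity, hDw, hσC, sub_neg_eq_add, ← two_smul K,
      smul_smul, neg_mul, inv_mul_cancel₀ two_ne_zero, neg_smul, one_smul]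

end IsKoszulDifferential

/-- A `D`-closed correction `e` of the generator `x q` by an odd element of the `q`-th Koszul
stage, invisible after multiplication by the product of the earlier generators. -/
structure IsClosedLift (σ : A →ₐ[K] A) (c : Fin n → A →ₗ[K] A) (x : Fin n → A) (q : Fin n)
    (D : MvPowerSeries (Fin n) A →ₗ[K] MvPowerSeries (Fin n) A) (e : MvPowerSeries (Fin n) A) :
    Prop where
  isDualTo : IsDualTo (mapAlgHom σ) (fun i ↦ coeffwise (Fin n) (c i)) q e
  closed : D e = 0
  mem : e ∈ tailKernel (partialDeriv K A) q
  volume_mul : volume x q * constantCoeff e = volume x (q + 1)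

namespace IsKoszulDifferential

variable {q : Fin n} {D : MvPowerSeries (Fin n) A →ₗ[K] MvPowerSeries (Fin n) A}

theorem exists_isClosedLift [CharZero K] [Nontrivial A] (hD : IsKoszulDifferential 𝒜 σ c d q D)
    (H : IsSullivanPresentation 𝒜 σ c x d) : ∃ e, IsClosedLift σ c x q D e := by
  obtain ⟨φ, ⟨hφc, hφd⟩, hφσ, hDφ⟩ := hD.exists_odd_correction H
  have hX : IsDualTo (mapAlgHom σ) (fun i ↦ coeffwise (Fin n) (c i)) q (C (x q)) :=
    (H.isDualTo q).C
  have hφ_const : volume x q * constantCoeff φ = 0 := by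
    refine H.volume_mul_eq_zero_of_odd q.is_le' (mem_tailKernel.mpr fun i hi ↦ ?_) ?_
    · exact congrArg constantCoeff (mem_tailKernel.mp hφc i hi)
    · exact congrArg constantCoeff hφσ
  refine ⟨C (x q) + φ, ⟨?_, ?_, fun i hi ↦ ?_⟩, ?_, mem_tailKernel.mpr fun i hi ↦ ?_, ?_⟩
  · rw [map_add, hX.odd, hφσ, neg_add]
  · rw [map_add, hX.self, mem_tailKernel.mp hφc q le_rfl, add_zero]
  · rw [map_add, hX.of_lt i hi, mem_tailKernel.mp hφc i hi.le, add_zero]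
  · rw [map_add, hD.map_C, hDφ, add_neg_cancel]
  · rw [map_add, partialDeriv_C, mem_tailKernel.mp hφd i hi, add_zero]
  · rw [map_add, constantCoeff_C, mul_add, hφ_const, add_zero, volume_succ]

end IsKoszulDifferential

/-- The Koszul perturbation `D + e ∂/∂y_q`. -/
noncomputable def twist (q : Fin n) (D : MvPowerSeries (Fin n) A →ₗ[K] MvPowerSeries (Fin n) A)
    (e : MvPowerSeries (Fin n) A) : MvPowerSeries (Fin n) A →ₗ[K] MvPowerSeries (Fin n) A :=
  D + LinearMap.mulLeft K e ∘ₗ partialDeriv K A q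

theorem twist_apply (q : Fin n) (D : MvPowerSeries (Fin n) A →ₗ[K] MvPowerSeries (Fin n) A)
    (e s : MvPowerSeries (Fin n) A) : twist q D e s = D s + e * partialDeriv K A q s :=
  rfl

namespace IsClosedLift

variable {q : Fin n} {e : MvPowerSeries (Fin n) A}
  {D : MvPowerSeries (Fin n) A →ₗ[K] MvPowerSeries (Fin n) A}

theorem partialDeriv_mul (he : IsClosedLift σ c x q D e) {i : Fin n} (hi : q ≤ i)
    (s : MvPowerSeries (Fin n) A) :
    partialDeriv K A i (e * s) = e * partialDeriv K A i s := by
  rw [OddSullivan.partialDeriv_mul, mem_tailKernel.mp he.mem i hi, zero_mul, zero_add]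

theorem map_mul (he : IsClosedLift σ c x q D e) (hD : IsKoszulDifferential 𝒜 σ c d q D)
    (s : MvPowerSeries (Fin n) A) : D (e * s) = -(e * D s) := by
  rw [hD.isOddDerivation.odd_mul he.isDualTo.odd, he.closed, zero_mul, zero_sub]

theorem mul_mul_self [CharZero K] (he : IsClosedLift σ c x q D e)
    (H : IsSullivanPresentation 𝒜 σ c x d) (s : MvPowerSeries (Fin n) A) : e * (e * s) = 0 :=
  H.isSupercommutative.mapAlgHom.odd_mul_mul_self he.isDualTo.odd s

theorem mem_coeffFiltration (he : IsClosedLift σ c x q D e)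
    (H : IsSullivanPresentation 𝒜 σ c x d) : e ∈ coeffFiltration 𝒜 n 2 := fun m ↦
  H.odd_mem_filtration _ (by simpa using congrArg (coeff m) he.isDualTo.odd)

theorem twist_add_mul [CharZero K] (he : IsClosedLift σ c x q D e)
    (hD : IsKoszulDifferential 𝒜 σ c d q D) (H : IsSullivanPresentation 𝒜 σ c x d)
    (a b : MvPowerSeries (Fin n) A) :
    twist q D e (a + e * b) = D a + e * (partialDeriv K A q a - D b) := by
  rw [twist_apply, map_add, map_add, he.map_mul hD, he.partialDeriv_mul le_rfl, mul_add,
    he.mul_mul_self H, mul_sub]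
  abel

theorem eq_zero_of_twist_add_mul_eq_zero [CharZero K] (he : IsClosedLift σ c x q D e)
    (hD : IsKoszulDifferential 𝒜 σ c d q D) (H : IsSullivanPresentation 𝒜 σ c x d)
    {a b : MvPowerSeries (Fin n) A} (ha : a ∈ tailKernel (fun i ↦ coeffwise (Fin n) (c i)) q)
    (hb : b ∈ tailKernel (fun i ↦ coeffwise (Fin n) (c i)) q)
    (hab : twist q D e (a + e * b) = 0) : partialDeriv K A q a = D b ∧ D a = 0 := by
  have hDa := hD.map_mem_tailKernel q le_rfl a ha
  have hrest := sub_mem (partialDeriv_mem_tailKernel ha q) (hD.map_mem_tailKernel q le_rfl b hb)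
  rw [he.twist_add_mul hD H] at hab
  have h : partialDeriv K A q a - D b = 0 := by
    simpa [mem_tailKernel.mp hDa q le_rfl,
      H.isContractionFamily.coeffwise.map_dual_mul he.isDualTo hrest]
      using congrArg (coeffwise (Fin n) (c q)) hab
  exact ⟨sub_eq_zero.mp h, by rwa [h, mul_zero, add_zero] at hab⟩

theorem exists_eq_add_mul [CharZero K] (he : IsClosedLift σ c x q D e)
    (H : IsSullivanPresentation 𝒜 σ c x d) {z : MvPowerSeries (Fin n) A}
    (hz : z ∈ koszulAlgebra c (q + 1)) : ∃ a b,
      a ∈ tailKernel (fun i ↦ coeffwise (Fin n) (c i)) q ⊓ tailKernel (partialDeriv K A) (q + 1) ∧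
      b ∈ tailKernel (fun i ↦ coeffwise (Fin n) (c i)) q ⊓ tailKernel (partialDeriv K A) (q + 1) ∧
      z = a + e * b := by
  have hc := H.isContractionFamily.coeffwise
  have hb : coeffwise (Fin n) (c q) z ∈ tailKernel (partialDeriv K A) (q + 1) :=
    coeffwise_mem_tailKernel hz.2 (c q)
  refine ⟨z - e * coeffwise (Fin n) (c q) z, coeffwise (Fin n) (c q) z,
    ⟨hc.sub_mul_mem he.isDualTo hz.1, sub_mem hz.2 (mem_tailKernel.mpr fun i hi ↦ ?_)⟩,
    ⟨hc.map_mem hz.1, hb⟩, (sub_add_cancel _ _).symm⟩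
  rw [he.partialDeriv_mul (by lia), mem_tailKernel.mp hb i hi, mul_zero]

theorem twist_acyclic [CharZero K] (he : IsClosedLift σ c x q D e)
    (hD : IsKoszulDifferential 𝒜 σ c d q D) (H : IsSullivanPresentation 𝒜 σ c x d)
    {z : MvPowerSeries (Fin n) A} (hz : z ∈ koszulAlgebra c (q + 1)) (hDz : twist q D e z = 0) :
    ∃ k : K, ∃ w ∈ koszulAlgebra c (q + 1), z = k • 1 + twist q D e w := by
  obtain ⟨a, b, ⟨hac, had⟩, ⟨hbc, hbd⟩, rfl⟩ := he.exists_eq_add_mul H hz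
  obtain ⟨hab, hDa⟩ := he.eq_zero_of_twist_add_mul_eq_zero hD H hac hbc hDz
  set B := partialAntideriv K A q b with hB
  have hBb : partialDeriv K A q B = b := partialDeriv_partialAntideriv q b
  have hBc : B ∈ tailKernel (fun i ↦ coeffwise (Fin n) (c i)) q :=
    partialAntideriv_mem_tailKernel hbc q
  have hBd : B ∈ tailKernel (partialDeriv K A) (q + 1) := mem_tailKernel.mpr fun i hi ↦ by
    rw [hB, partialDeriv_partialAntideriv_of_ne (by lia), mem_tailKernel.mp hbd i hi, map_zero]
  have hK : a - D B ∈ koszulAlgebra c q := by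
    refine ⟨sub_mem hac (hD.map_mem_tailKernel q le_rfl B hBc), mem_tailKernel.mpr fun i hi ↦ ?_⟩
    rw [map_sub, hD.partialDeriv_map i hi]
    obtain rfl | hiq := eq_or_ne i q
    · rw [hBb, hab, sub_self]
    · rw [mem_tailKernel.mp had i (by lia), mem_tailKernel.mp hBd i (by lia), map_zero, sub_zero]
  obtain ⟨k, w, ⟨hwc, hwd⟩, hkw⟩ :=
    hD.acyclic _ hK (by rw [map_sub, hDa, hD.square_zero, sub_zero])
  have hq := q.val.le_succ
  refine ⟨k, w + B, ⟨tailKernel_mono _ hq (add_mem hwc hBc),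
    add_mem (tailKernel_mono _ hq hwd) hBd⟩, ?_⟩
  rw [twist_apply, map_add, map_add, hBb, mem_tailKernel.mp hwd q le_rfl, zero_add, ← add_assoc,
    ← add_assoc, ← hkw, sub_add_cancel]

theorem isKoszulDifferential_twist [CharZero K] (he : IsClosedLift σ c x q D e)
    (hD : IsKoszulDifferential 𝒜 σ c d q D) (H : IsSullivanPresentation 𝒜 σ c x d) :
    IsKoszulDifferential 𝒜 σ c d (q + 1) (twist q D e) where
  isOddDerivation := hD.isOddDerivation.add_odd_mul H.isSupercommutative.mapAlgHom
    he.isDualTo.odd (OddSullivan.partialDeriv_mul q) fun s ↦ (mapAlgHom_partialDeriv σ q s).symm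
  square_zero s := by
    simp only [twist_apply, map_add, hD.square_zero, he.map_mul hD, he.partialDeriv_mul le_rfl,
      hD.partialDeriv_map q le_rfl, he.mul_mul_self H]
    abel
  map_C a := by rw [twist_apply, partialDeriv_C, mul_zero, add_zero, hD.map_C]
  partialDeriv_map i hi s := by
    rw [twist_apply, twist_apply, map_add, hD.partialDeriv_map i (by lia),
      he.partialDeriv_mul (by lia), partialDeriv_comm]
  map_mem_tailKernel r hr s hs := by
    refine add_mem (hD.map_mem_tailKernel r (by lia) s hs) <|
      H.isContractionFamily.coeffwise.mul_mem (tailKernel_mono _ hr he.isDualTo.mem)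
        (partialDeriv_mem_tailKernel hs q)
  sub_coeffwise_mem r s hs := by
    rw [twist_apply, add_sub_right_comm, add_comm r 2]
    exact add_mem (add_comm r 2 ▸ hD.sub_coeffwise_mem r s hs) <|
      mul_mem_coeffFiltration (he.mem_coeffFiltration H) (partialDeriv_mem_coeffFiltration hs q)
  acyclic _ hz hDz := he.twist_acyclic hD H hz hDz

end IsClosedLift

end KoszulStages

section Detection

open MvPowerSeries

variable {K A : Type*} [Field K] [Ring A] [Algebra K A] {n : ℕ}
  {𝒜 : ℕ → Submodule K A} [GradedAlgebra 𝒜] {σ : A →ₐ[K] A} {c : Fin n → A →ₗ[K] A} {x : Fin n → A}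
  {d : A →ₗ[K] A} {T : Finset ℕ}

/-- Multiply the constant coefficient by the product of the first `p` generators. -/
noncomputable def volumeFunctional (K : Type*) {A : Type*} [Field K] [Ring A] [Algebra K A]
    {n : ℕ} (x : Fin n → A) (p : ℕ) : MvPowerSeries (Fin n) A →ₗ[K] A where
  toFun s := volume x p * constantCoeff s
  map_add' s t := by rw [map_add, mul_add]
  map_smul' k s := by
    rw [constantCoeff_smul, mul_smul_comm, RingHom.id_apply]

theorem volumeFunctional_apply (x : Fin n → A) (p : ℕ) (s : MvPowerSeries (Fin n) A) :
    volumeFunctional K x p s = volume x p * constantCoeff s :=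
  rfl

/-- The invariant of the counting argument at stage `p`: a `D`-closed series of order at least `r`
has exact image under `volumeFunctional K x p` if at most `p` elements of `T` are at least `r`. -/
structure DetectsVolume (𝒜 : ℕ → Submodule K A) [GradedAlgebra 𝒜] (x : Fin n → A) (d : A →ₗ[K] A)
    (T : Finset ℕ) (p : ℕ) (D : MvPowerSeries (Fin n) A →ₗ[K] MvPowerSeries (Fin n) A) :
    Prop where
  map_mem_range : ∀ s, volumeFunctional K x p (D s) ∈ LinearMap.range d
  mem_range_of_closed : ∀ r, (T.filter (r ≤ ·)).card ≤ p → ∀ z ∈ coeffFiltration 𝒜 n r, D z = 0 →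
    volumeFunctional K x p z ∈ LinearMap.range d

theorem IsSullivanPresentation.detectsVolume_zero [CharZero K] [Nontrivial A]
    (H : IsSullivanPresentation 𝒜 σ c x d) (hT : cohomologyDegrees 𝒜 d ⊆ T) :
    DetectsVolume 𝒜 x d T 0 (coeffwise (Fin n) d) := by
  have hmap (s : MvPowerSeries (Fin n) A) :
      volumeFunctional K x 0 (coeffwise (Fin n) d s) ∈ LinearMap.range d :=
    ⟨constantCoeff s, by rw [volumeFunctional_apply, volume_zero, one_mul]; rfl⟩
  refine ⟨hmap, fun r hr z hz hDz ↦
    H.isKoszulDifferential_zero.map_mem_range_of_forall_mem H hmap r (fun t ht hrt ↦ ?_) hz hDz⟩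
  have ht' : t ∈ T.filter (r ≤ ·) := Finset.mem_filter.mpr ⟨hT ht, hrt⟩
  rw [Finset.card_eq_zero.mp (Nat.le_zero.mp hr)] at ht'
  exact absurd ht' (Finset.notMem_empty t)

namespace IsClosedLift

variable {q : Fin n} {e : MvPowerSeries (Fin n) A}
  {D : MvPowerSeries (Fin n) A →ₗ[K] MvPowerSeries (Fin n) A}

theorem volumeFunctional_succ (he : IsClosedLift σ c x q D e) (s : MvPowerSeries (Fin n) A) :
    volumeFunctional K x (q + 1) s = volumeFunctional K x q (e * s) := by
  rw [volumeFunctional_apply, volumeFunctional_apply, ← he.volume_mul, _root_.map_mul, mul_assoc]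

variable [CharZero K]

theorem map_mul_eq_neg_mul_twist (he : IsClosedLift σ c x q D e)
    (hD : IsKoszulDifferential 𝒜 σ c d q D) (H : IsSullivanPresentation 𝒜 σ c x d)
    (s : MvPowerSeries (Fin n) A) : D (e * s) = -(e * twist q D e s) := by
  rw [twist_apply, mul_add, he.mul_mul_self H, add_zero, he.map_mul hD]

variable [Nontrivial A]

theorem detectsVolume_twist (he : IsClosedLift σ c x q D e)
    (hD : IsKoszulDifferential 𝒜 σ c d q D) (H : IsSullivanPresentation 𝒜 σ c x d)
    (hT : cohomologyDegrees 𝒜 d ⊆ T) (h : DetectsVolume 𝒜 x d T q D) :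
    DetectsVolume 𝒜 x d T (q + 1) (twist q D e) := by
  have hmap (s : MvPowerSeries (Fin n) A) :
      volumeFunctional K x (q + 1) (twist q D e s) ∈ LinearMap.range d := by
    rw [he.volumeFunctional_succ, ← neg_neg (e * _), ← he.map_mul_eq_neg_mul_twist hD H, map_neg]
    exact neg_mem (h.map_mem_range _)
  refine ⟨hmap, fun r hr z hz hDz ↦
    (he.isKoszulDifferential_twist hD H).map_mem_range_of_forall_mem H hmap r
      (fun t ht hrt z hz hDz ↦ ?_) hz hDz⟩
  have hcard : (T.filter (t + 1 ≤ ·)).card < (T.filter (r ≤ ·)).card := by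
    refine Finset.card_lt_card (Finset.ssubset_iff_of_subset (fun j hj ↦ ?_) |>.mpr ⟨t, ?_, ?_⟩)
    · simp only [Finset.mem_filter] at hj ⊢
      exact ⟨hj.1, by lia⟩
    · exact Finset.mem_filter.mpr ⟨hT ht, hrt⟩
    · simp
  have hez : e * z ∈ coeffFiltration 𝒜 n (t + 1) := coeffFiltration_anti (by lia)
    (mul_mem_coeffFiltration (he.mem_coeffFiltration H) hz)
  rw [he.volumeFunctional_succ]
  refine h.mem_range_of_closed (t + 1) (by lia) _ hez ?_
  rw [he.map_mul_eq_neg_mul_twist hD H, hDz, mul_zero, neg_zero]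

end IsClosedLift

namespace IsSullivanPresentation

variable [CharZero K] [Nontrivial A]

theorem exists_detectsVolume (H : IsSullivanPresentation 𝒜 σ c x d)
    (hT : cohomologyDegrees 𝒜 d ⊆ T) {p : ℕ} (hp : p ≤ n) :
    ∃ D, IsKoszulDifferential 𝒜 σ c d p D ∧ DetectsVolume 𝒜 x d T p D := by
  induction p with
  | zero => exact ⟨_, H.isKoszulDifferential_zero, H.detectsVolume_zero hT⟩
  | succ q ih =>
    lift q to Fin n using hp
    obtain ⟨D, hD, hdet⟩ := ih q.is_le'
    obtain ⟨e, he⟩ := hD.exists_isClosedLift H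
    exact ⟨_, he.isKoszulDifferential_twist hD H, he.detectsVolume_twist hD H hT hdet⟩

theorem lt_card_of_cohomologyDegrees_subset (H : IsSullivanPresentation 𝒜 σ c x d)
    (hT : cohomologyDegrees 𝒜 d ⊆ T) : n < T.card := by
  by_contra! hcard
  obtain ⟨D, hD, hdet⟩ := H.exists_detectsVolume hT le_rfl
  obtain ⟨a, ha⟩ := hdet.mem_range_of_closed 0 ((Finset.card_filter_le _ _).trans hcard) 1
    (fun m ↦ mem_filtration_zero _) hD.isOddDerivation.map_one
  rw [volumeFunctional_apply, constantCoeff_one, mul_one] at ha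
  exact H.map_ne_volume le_rfl (mem_tailKernel.mpr fun i hi ↦ absurd i.isLt hi.not_gt) ha

theorem lt_rank_cohomology (H : IsSullivanPresentation 𝒜 σ c x d) :
    (n : Cardinal) < Module.rank K (Cohomology d) := by
  obtain ⟨N, hN⟩ := H.exists_filtration_eq_bot
  have hfin : (cohomologyDegrees 𝒜 d).Finite := finite_cohomologyDegrees hN
  exact (Nat.cast_lt.mpr (H.lt_card_of_cohomologyDegrees_subset hfin.coe_toFinset.ge)).trans_le
    (card_le_rank_cohomology H.map_degree hfin.coe_toFinset.le)

end IsSullivanPresentation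

end Detection

section OddGradings

open ExteriorAlgebra

variable {K V : Type*} [Field K] [AddCommGroup V] [Module K V] {ℬ : ℕ → Submodule K V}
  {𝒜 : ℕ → Submodule K (ExteriorAlgebra K V)}

/-- A grading `ℬ` of `V` concentrated in odd degrees at least `3`, compatible with a grading `𝒜` of
the exterior algebra. -/
structure IsOddGrading (ℬ : ℕ → Submodule K V) (𝒜 : ℕ → Submodule K (ExteriorAlgebra K V)) :
    Prop where
  isInternal : DirectSum.IsInternal ℬ
  eq_bot : ∀ i, ¬ Odd i ∨ i < 3 → ℬ i = ⊥
  ι_mem : ∀ i, ∀ v ∈ ℬ i, ι K v ∈ 𝒜 i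

theorem induction_of_isInternal (h : DirectSum.IsInternal ℬ) {P : V → Prop} (zero : P 0)
    (add : ∀ v w, P v → P w → P (v + w)) (mem : ∀ i, ∀ v ∈ ℬ i, P v) (v : V) : P v :=
  Submodule.iSup_induction ℬ (motive := P) (h.submodule_iSup_eq_top ▸ Submodule.mem_top) mem zero
    add

theorem exists_basis_monotone_degree [FiniteDimensional K V] (h : DirectSum.IsInternal ℬ) :
    ∃ (n : ℕ) (b : Module.Basis (Fin n) K V) (deg : Fin n → ℕ), Monotone deg ∧
      (∀ i, b i ∈ ℬ (deg i)) ∧ ∀ i k, k ≠ deg i → ∀ v ∈ ℬ k, b.coord i v = 0 := by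
  let b₀ := h.collectedBasis fun i ↦ Module.finBasis K (ℬ i)
  let _ := FiniteDimensional.fintypeBasisIndex b₀
  let e := Fintype.equivFin ((i : ℕ) × Fin (Module.finrank K (ℬ i)))
  let τ := Tuple.sort fun j ↦ (e.symm j).1
  refine ⟨_, b₀.reindex (e.trans τ.symm), fun j ↦ (e.symm (τ j)).1,
    Tuple.monotone_sort fun j ↦ (e.symm j).1, fun i ↦ ?_, fun i k hk v hv ↦ ?_⟩
  · rw [Module.Basis.reindex_apply]
    exact h.collectedBasis_mem _ _
  · rw [Module.Basis.coord_apply, Module.Basis.repr_reindex_apply]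
    exact h.collectedBasis_repr_of_mem_ne _ hk hv

namespace IsOddGrading

theorem eq_zero_or_odd (H : IsOddGrading ℬ 𝒜) {i : ℕ} {v : V} (hv : v ∈ ℬ i) :
    v = 0 ∨ Odd i ∧ 3 ≤ i := by
  rw [or_iff_not_imp_right, not_and_or, not_le]
  intro hi
  rwa [H.eq_bot i hi, Submodule.mem_bot] at hv

variable [GradedAlgebra 𝒜]

theorem homogeneous_induction (H : IsOddGrading ℬ 𝒜) {P : ℕ → ExteriorAlgebra K V → Prop}
    (zero : ∀ s, P s 0) (scalar : ∀ q : K, P 0 (q • 1))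
    (add : ∀ s a b, P s a → P s b → P s (a + b))
    (ι_mul : ∀ i s v a, v ∈ ℬ i → v ≠ 0 → a ∈ 𝒜 s → P s a → P (i + s) (ι K v * a))
    {s : ℕ} {a : ExteriorAlgebra K V} (ha : a ∈ 𝒜 s) : P s a := by
  suffices h : ∀ (a : ExteriorAlgebra K V) (s : ℕ), P s (GradedAlgebra.proj 𝒜 s a) from
    proj_of_mem 𝒜 ha ▸ h a s
  intro a
  induction a using exterior_induction with
  | scalar q =>
    intro s
    have hq : q • (1 : ExteriorAlgebra K V) ∈ 𝒜 0 :=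
      Submodule.smul_mem _ _ SetLike.GradedOne.one_mem
    obtain rfl | hs := eq_or_ne s 0
    · exact (proj_of_mem 𝒜 hq).symm ▸ scalar q
    · exact (proj_of_mem_ne 𝒜 hq hs.symm).symm ▸ zero s
  | add a b iha ihb => exact fun s ↦ by rw [map_add]; exact add s _ _ (iha s) (ihb s)
  | ι_mul v a ih =>
    intro s
    induction v using induction_of_isInternal H.isInternal with
    | zero => simpa using zero s
    | add v w hv hw => simpa only [map_add, add_mul] using add s _ _ hv hw
    | mem i v hv =>
      obtain rfl | hv0 := eq_or_ne v 0
      · simpa using zero s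
      have hιv := H.ι_mem i v hv
      by_cases his : i ≤ s
      · obtain ⟨t, rfl⟩ := Nat.exists_eq_add_of_le his
        have hproj : GradedAlgebra.proj 𝒜 (i + t) (ι K v * a) =
            ι K v * GradedAlgebra.proj 𝒜 t a :=
          DirectSum.coe_decompose_mul_add_of_left_mem 𝒜 hιv
        exact hproj ▸ ι_mul i t v _ hv hv0 (proj_mem 𝒜 t a) (ih t)
      · have hproj : GradedAlgebra.proj 𝒜 s (ι K v * a) = 0 :=
          DirectSum.coe_decompose_mul_of_left_mem_of_not_le 𝒜 hιv his
        exact hproj.symm ▸ zero s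

theorem parity_of_mem (H : IsOddGrading ℬ 𝒜) {s : ℕ} {a : ExteriorAlgebra K V} (ha : a ∈ 𝒜 s) :
    parity K V a = (-1 : K) ^ s • a := by
  refine H.homogeneous_induction (P := fun s a ↦ parity K V a = (-1 : K) ^ s • a) (by simp)
    (by simp) (fun s a b ha hb ↦ by rw [map_add, ha, hb, smul_add])
    (fun i s v a hv hv0 _ ha ↦ ?_) ha
  obtain ⟨hi, -⟩ := (H.eq_zero_or_odd hv).resolve_left hv0
  rw [map_mul, parity_ι, ha, pow_add, hi.neg_one_pow, neg_one_mul, neg_smul, mul_smul_comm, neg_mul,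
    smul_neg]

theorem eq_zero_of_mem_one (H : IsOddGrading ℬ 𝒜) {a : ExteriorAlgebra K V} (ha : a ∈ 𝒜 1) :
    a = 0 :=
  H.homogeneous_induction (P := fun s a ↦ s = 1 → a = 0) (fun _ _ ↦ rfl) (fun _ h ↦ by lia)
    (fun _ a b ha hb h ↦ by rw [ha h, hb h, add_zero])
    (fun _ _ _ _ hv hv0 _ _ h ↦ by have := (H.eq_zero_or_odd hv).resolve_left hv0; lia) ha rfl

theorem proj_parity (H : IsOddGrading ℬ 𝒜) (k : ℕ) (a : ExteriorAlgebra K V) :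
    GradedAlgebra.proj 𝒜 k (parity K V a) = (-1 : K) ^ k • GradedAlgebra.proj 𝒜 k a := by
  induction a using DirectSum.Decomposition.inductionOn 𝒜 with
  | zero => simp
  | add a b ha hb => rw [map_add, map_add, ha, hb, map_add, smul_add]
  | @homogeneous j a =>
    rw [H.parity_of_mem a.2, map_smul]
    obtain rfl | hjk := eq_or_ne j k
    · rfl
    · rw [proj_of_mem_ne 𝒜 a.2 hjk, smul_zero, smul_zero]

theorem mem_filtration_two_of_odd [CharZero K] (H : IsOddGrading ℬ 𝒜) {a : ExteriorAlgebra K V}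
    (ha : parity K V a = -a) : a ∈ filtration 𝒜 2 := by
  refine mem_filtration.mpr fun i hi ↦ ?_
  obtain rfl | rfl : i = 0 ∨ i = 1 := by lia
  · have h := H.proj_parity 0 a
    rw [ha, map_neg, pow_zero, one_smul, neg_eq_iff_add_eq_zero, ← two_smul K] at h
    exact (smul_eq_zero.mp h).resolve_left two_ne_zero
  · exact H.eq_zero_of_mem_one (proj_mem 𝒜 1 a)

theorem proj_contraction_eq_zero (H : IsOddGrading ℬ 𝒜) {l : Module.Dual K V} {m : ℕ}
    (hl : ∀ i < m, ∀ v ∈ ℬ i, l v = 0) {s : ℕ} {a : ExteriorAlgebra K V} (ha : a ∈ 𝒜 s) {k : ℕ}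
    (hk : s < k + m) : GradedAlgebra.proj 𝒜 k (contraction l a) = 0 := by
  refine H.homogeneous_induction
    (P := fun s a ↦ ∀ k, s < k + m → GradedAlgebra.proj 𝒜 k (contraction l a) = 0) (by simp)
    (by simp) (fun s a b ha hb k hk ↦ ?_) (fun i s v a hv _ has ha k hk ↦ ?_) ha k hk
  · rw [map_add, map_add, ha k hk, hb k hk, add_zero]
  have hscalar : l v • GradedAlgebra.proj 𝒜 k a = 0 := by
    by_cases him : i < m
    · rw [hl i him v hv, zero_smul]
    · rw [proj_of_mem_ne 𝒜 has (by lia), smul_zero]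
  have hmul : GradedAlgebra.proj 𝒜 k (ι K v * contraction l a) = 0 := by
    by_cases hik : i ≤ k
    · rw [GradedAlgebra.proj_apply,
        DirectSum.coe_decompose_mul_of_left_mem_of_le 𝒜 (H.ι_mem i v hv) hik,
        ← GradedAlgebra.proj_apply 𝒜 (k - i), ha _ (by lia), mul_zero]
    · exact DirectSum.coe_decompose_mul_of_left_mem_of_not_le 𝒜 (H.ι_mem i v hv) hik
  rw [contraction_ι_mul, map_sub, map_smul, hscalar, hmul, sub_zero]

end IsOddGrading

end OddGradings

section SullivanDifferentials

open ExteriorAlgebra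

variable {K V : Type*} [Field K] [AddCommGroup V] [Module K V] {ℬ : ℕ → Submodule K V}
  {𝒜 : ℕ → Submodule K (ExteriorAlgebra K V)} {d : ExteriorAlgebra K V →ₗ[K] ExteriorAlgebra K V}

/-- A differential of degree `1` on the exterior algebra. The sign in the Leibniz rule is given by
word length, which has the parity of the degree for odd generators. -/
structure IsSullivanDifferential (𝒜 : ℕ → Submodule K (ExteriorAlgebra K V))
    (d : ExteriorAlgebra K V →ₗ[K] ExteriorAlgebra K V) : Prop where
  square_zero : ∀ a, d (d a) = 0
  map_degree : ∀ r, ∀ a ∈ 𝒜 r, d a ∈ 𝒜 (r + 1)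
  leibniz : ∀ k, ∀ a ∈ (⋀[K]^k V : Submodule K (ExteriorAlgebra K V)), ∀ b,
    d (a * b) = d a * b + (-1 : K) ^ k • (a * d b)

namespace IsSullivanDifferential

theorem map_one (hd : IsSullivanDifferential 𝒜 d) : d 1 = 0 := by
  simpa using hd.leibniz 0 1 (by rw [exteriorPower, pow_zero]; exact Submodule.one_le.mp le_rfl) 1

theorem map_ι_mul (hd : IsSullivanDifferential 𝒜 d) (v : V) (a : ExteriorAlgebra K V) :
    d (ι K v * a) = d (ι K v) * a - ι K v * d a := by
  rw [hd.leibniz 1 (ι K v) (by rw [exteriorPower, pow_one]; exact ⟨v, rfl⟩), pow_one, neg_one_smul,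
    sub_eq_add_neg]

variable [GradedAlgebra 𝒜]

theorem parity_map_ι (hd : IsSullivanDifferential 𝒜 d) (H : IsOddGrading ℬ 𝒜) (v : V) :
    parity K V (d (ι K v)) = d (ι K v) := by
  induction v using induction_of_isInternal H.isInternal with
  | zero => simp
  | add v w hv hw => simp only [map_add, hv, hw]
  | mem i v hv =>
    obtain rfl | ⟨hi, -⟩ := H.eq_zero_or_odd hv
    · simp
    · rw [H.parity_of_mem (hd.map_degree i _ (H.ι_mem i v hv)), hi.add_one.neg_one_pow, one_smul]

theorem contraction_map_ι_eq_zero [CharZero K] (hd : IsSullivanDifferential 𝒜 d)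
    (H : IsOddGrading ℬ 𝒜) {l : Module.Dual K V} {m j : ℕ} (hjm : j ≤ m)
    (hl : ∀ i < m, ∀ v ∈ ℬ i, l v = 0) {v : V} (hv : v ∈ ℬ j) :
    contraction l (d (ι K v)) = 0 := by
  refine ext_proj 𝒜 fun k ↦ ?_
  rw [map_zero]
  by_cases hk : k < 2
  · refine mem_filtration.mp (H.mem_filtration_two_of_odd ?_) k hk
    have h := (isOddDerivation_contraction l).map_parity (d (ι K v))
    rw [hd.parity_map_ι H] at h
    exact neg_eq_iff_eq_neg.mp h.symm
  · exact H.proj_contraction_eq_zero hl (hd.map_degree j _ (H.ι_mem j v hv)) (by lia)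

theorem isSullivanPresentation [CharZero K] (hd : IsSullivanDifferential 𝒜 d)
    (H : IsOddGrading ℬ 𝒜) {n : ℕ} (b : Module.Basis (Fin n) K V) {deg : Fin n → ℕ}
    (hdeg : Monotone deg) (hb : ∀ i, b i ∈ ℬ (deg i))
    (hcoord : ∀ i k, k ≠ deg i → ∀ v ∈ ℬ k, b.coord i v = 0) :
    IsSullivanPresentation 𝒜 (parity K V) (fun i ↦ contraction (b.coord i)) (fun i ↦ ι K (b i))
      d where
  isSupercommutative := isSupercommutative_parity
  isContractionFamily := isContractionFamily_contraction b
  isDualTo := isDualTo_ι b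
  eq_smul_one _ ha := exists_eq_smul_one_of_contraction_eq_zero b fun i ↦
    mem_tailKernel.mp ha i i.val.zero_le
  isOddDerivation := isOddDerivation_of_ι hd.map_one hd.map_ι_mul (hd.parity_map_ι H)
  square_zero := hd.square_zero
  map_generator i := mem_tailKernel.mpr fun j hij ↦
    hd.contraction_map_ι_eq_zero H (hdeg hij) (fun k hk ↦ hcoord j k hk.ne) (hb i)
  map_degree := hd.map_degree
  odd_mem_filtration _ ha := H.mem_filtration_two_of_odd ha
  exists_filtration_eq_bot :=
    haveI := Module.Finite.of_basis b.ExteriorAlgebra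
    exists_filtration_eq_bot 𝒜

end IsSullivanDifferential

end SullivanDifferentials

end OddSullivan

universe u v

open OddSullivan in
theorem hilali_conjecture_odd_generators_general {K : Type u} {V : Type v} [Field K] [CharZero K]
    [AddCommGroup V] [Module K V] [FiniteDimensional K V]
    (ℬ : ℕ → Submodule K V) (𝒜 : ℕ → Submodule K (ExteriorAlgebra K V)) [GradedAlgebra 𝒜]
    (d : ExteriorAlgebra K V →ₗ[K] ExteriorAlgebra K V)
    (H : IsOddGrading ℬ 𝒜) (hd : IsSullivanDifferential 𝒜 d) :
    Cardinal.lift.{u} (Module.rank K V) < Module.rank K (Cohomology d) := by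
  obtain ⟨n, b, deg, hdeg, hb, hcoord⟩ := exists_basis_monotone_degree H.isInternal
  have hrank : Module.rank K V = n := by rw [rank_eq_card_basis b, Fintype.card_fin]
  rw [hrank, Cardinal.lift_natCast]
  exact (hd.isSullivanPresentation H b hdeg hb hcoord).lt_rank_cohomology

/-- Let `V = V^odd` be a finite-dimensional graded ℚ-vector space
concentrated in odd degrees `≥ 3`, and `(ΛV, d)` a Sullivan minimal algebra;
since `V` is oddly graded, `ΛV` is the exterior algebra on `V`.  Then
`dim H(ΛV, d) ≥ dim V`. -/
theorem hilali_conjecture_odd_generators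
    {V : Type*} [AddCommGroup V] [Module ℚ V] [FiniteDimensional ℚ V]
    -- grading on V, concentrated in odd degrees ≥ 3
    (ℬ : ℕ → Submodule ℚ V) (hVint : DirectSum.IsInternal ℬ)
    (hodd : ∀ i : ℕ, (¬ Odd i ∨ i < 3) → ℬ i = ⊥)
    -- the induced cohomological grading on ΛV
    (𝒜 : ℕ → Submodule ℚ (ExteriorAlgebra ℚ V))
    (hAint : DirectSum.IsInternal 𝒜)
    (h1 : (1 : ExteriorAlgebra ℚ V) ∈ 𝒜 0)
    (hAmul : ∀ i j : ℕ, ∀ x ∈ 𝒜 i, ∀ y ∈ 𝒜 j, x * y ∈ 𝒜 (i + j))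
    (hι : ∀ i : ℕ, ∀ v ∈ ℬ i,
      (ExteriorAlgebra.ι ℚ : V →ₗ[ℚ] ExteriorAlgebra ℚ V) v ∈ 𝒜 i)
    -- the differential: square zero, of cohomological degree +1, a derivation
    -- with Koszul sign given by word length (= parity, as V is odd)
    (d : ExteriorAlgebra ℚ V →ₗ[ℚ] ExteriorAlgebra ℚ V)
    (hd2 : ∀ x, d (d x) = 0)
    (hddeg : ∀ n : ℕ, ∀ x ∈ 𝒜 n, d x ∈ 𝒜 (n + 1))
    (hLeib : ∀ i : ℕ,
      ∀ x ∈ ((LinearMap.range (ExteriorAlgebra.ι ℚ : V →ₗ[ℚ] ExteriorAlgebra ℚ V)) ^ i :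
        Submodule ℚ (ExteriorAlgebra ℚ V)), ∀ y,
        d (x * y) = d x * y + ((-1 : ℚ) ^ i) • (x * d y))
    -- minimality: d(V) ⊆ Λ^{≥2} V
    (hmin : ∀ v : V, d ((ExteriorAlgebra.ι ℚ : V →ₗ[ℚ] ExteriorAlgebra ℚ V) v) ∈
      ⨆ i : ℕ, ⨆ _ : 2 ≤ i,
        ((LinearMap.range (ExteriorAlgebra.ι ℚ : V →ₗ[ℚ] ExteriorAlgebra ℚ V)) ^ i :
          Submodule ℚ (ExteriorAlgebra ℚ V))) :
    Module.rank ℚ V ≤ Module.rank ℚ (cohomologyOf d) := by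
  let _ := hAint.chooseDecomposition
  let _ : GradedAlgebra 𝒜 := { one_mem := h1, mul_mem := fun i j x y hx hy ↦ hAmul i j x hx y hy }
  have h := hilali_conjecture_odd_generators_general ℬ 𝒜 d ⟨hVint, hodd, hι⟩ ⟨hd2, hddeg, hLeib⟩
  exact (Cardinal.lift_uzero (Module.rank ℚ V)).symm.trans_le h.le
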